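/- Suppose C ⊆ (Fin 5)^8 is a code with minimum Hamming distance at least 6 and |C| = 65. Then for every coordinate j ∈ {1, …, 8} and every symbol α ∈ Fin 5, exactly 13 words of C have symbol α in coordinate j. Consequently, A_5(8,6) ≤ 65: every code C ⊆ (Fin 5)^8 with minimum Hamming distance at least 6 has at most 65 elements. -/

import Mathlib

section
namespace KTS

/-- Evaluate a natural number before passing it on (helps kernel evaluation). -/
def force {α : Type} (n : Nat) (k : Nat → α) : α := Nat.rec (k 0) (fun m _ => k (Nat.succ m)) n

theorem force_eq {α : Type} (n : Nat) (k : Nat → α) : force n k = k n := by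
  cases n <;> rfl

/-- Conditional without proofs. -/
def ite' {α : Type} (b : Bool) (x y : α) : α := Bool.rec y x b

/-- Bit mask of the edge `e` placed in the cell (day `d`, point `f`). -/
def cellMask (d f e : Nat) : Nat :=
  Nat.lor (Nat.shiftLeft e (8 * f))
    (Nat.lor (Nat.shiftLeft e (8 * (7 + d))) (Nat.shiftLeft 1 (112 + e)))

def step (S : Nat) (k : Nat → Nat → Bool) (es : List (Nat × Nat)) : Bool :=
  List.rec true (fun e _ ih =>
    ite' (Nat.beq (Nat.land S e.2) 0)
      (ite' (force (Nat.lor S e.2) (fun S' => k S' e.1)) ih false) ih) es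

def search (chk : List Nat → Bool) (l : List (List (Nat × Nat))) : Nat → List Nat → Bool :=
  List.rec (fun _ acc => chk acc)
    (fun es _ ih S acc => step S (fun S' e => ih S' (e :: acc)) es) l

def mk (c : Nat × Nat × List Nat) : List (Nat × Nat) :=
  c.2.2.map fun e => (e, cellMask c.1 c.2.1 e)

def allEdges : List Nat := [3, 5, 9, 17, 33, 65, 129, 6, 10, 18, 34, 66, 130, 12, 20, 36, 68, 132,
  24, 40, 72, 136, 48, 80, 144, 96, 160, 192]

def spec : List (Nat × Nat × List Nat) :=
  [(0,2,[3]), (0,4,[12]), (0,5,[48]), (0,6,[192]), (3,2,[24,96,132]), (4,2,[24,96,132]),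
   (5,2,[24,96,132]), (3,5,allEdges), (3,1,allEdges), (3,0,allEdges), (6,5,allEdges),
   (1,5,allEdges), (4,6,allEdges), (1,6,allEdges), (2,6,allEdges), (4,1,allEdges),
   (4,3,allEdges), (2,1,allEdges), (6,1,allEdges), (2,4,allEdges), (2,0,allEdges),
   (6,4,allEdges), (5,4,allEdges), (6,3,allEdges), (1,0,allEdges), (5,3,allEdges),
   (1,3,allEdges), (5,0,allEdges)]

/-- Enumerate choices of one block per day such that no point (other than the distinguished point,
which is bit zero) is used more than twice. -/
def words (fin : Nat → Nat → List Nat → List (List Nat) → List (List Nat)) (l : List (List Nat)) :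
    Nat → Nat → List Nat → List (List Nat) → List (List Nat) :=
  List.rec fin (fun bs _ ih ones twos path out =>
    List.rec out (fun b _ ihb =>
      ite' (Nat.beq (Nat.land twos (Nat.div b 2)) 0)
        (force (Nat.xor ones (Nat.div b 2)) fun o =>
          force (Nat.lor twos (Nat.land ones (Nat.div b 2))) fun t =>
            ih o t (b :: path) ihb) ihb) bs) l

def fin0 (ones _twos : Nat) (path : List Nat) (out : List (List Nat)) : List (List Nat) :=
  ite' (Nat.beq ones 0) (path :: out) out

/-- Bitmap of all xors of one block from every day. -/
def reach (l : List (List Nat)) : Nat → Nat → Nat :=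
  List.rec (fun o R => Nat.lor R (Nat.shiftLeft 1 o)) (fun bs _ ih o R =>
    List.rec R (fun b _ R' => force R' fun R'' => force (Nat.xor o (Nat.div b 2)) fun o' => ih o' R'') bs) l

def forceL {α : Type} (l : List Nat) : (List Nat → α) → α :=
  List.rec (fun k => k []) (fun b _ ih k => force b fun b' => ih fun l' => k (b' :: l')) l

def forceLL {α : Type} (l : List (List Nat)) : (List (List Nat) → α) → α :=
  List.rec (fun k => k []) (fun b _ ih k => forceL b fun b' => ih fun l' => k (b' :: l')) l

def allWords (front0 back0 : List (List Nat)) : List (List Nat) :=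
  forceLL front0 fun front => forceLL back0 fun back => force (reach back 0 0) fun R =>
    words (fun ones twos path out => ite' (Nat.beq (Nat.land (Nat.shiftRight R ones) 1) 1)
      (words fin0 back ones twos path out) out) front 0 0 [] []

def blk (f e : Nat) : Nat := Nat.add (Nat.shiftLeft 1 f) (Nat.shiftLeft e 7)

def good (l : List (List Nat)) : Bool :=
  ite' (Nat.ble l.length 8) (Nat.ble
    (l.filter fun w => Nat.beq ((w.map fun b => Nat.mod b 2).sum) 1).length 3) false

def chk (acc : List Nat) : Bool :=
  good (allWords
   [[11, blk 2 (acc.getD 27 0), blk 4 (acc.getD 26 0), blk 5 (acc.getD 25 0),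
      blk 6 (acc.getD 24 0)],
    [22, blk 0 (acc.getD 3 0), blk 3 (acc.getD 1 0), blk 5 (acc.getD 16 0),
      blk 6 (acc.getD 14 0)],
    [44, blk 0 (acc.getD 7 0), blk 1 (acc.getD 10 0), blk 4 (acc.getD 8 0),
      blk 6 (acc.getD 13 0)],
    [88, blk 0 (acc.getD 18 0), blk 1 (acc.getD 19 0), blk 2 (acc.getD 23 0),
      blk 5 (acc.getD 20 0)]]
   [[49, blk 1 (acc.getD 12 0), blk 2 (acc.getD 22 0), blk 3 (acc.getD 11 0),
      blk 6 (acc.getD 15 0)],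
    [98, blk 0 (acc.getD 0 0), blk 2 (acc.getD 21 0), blk 3 (acc.getD 2 0),
      blk 4 (acc.getD 5 0)],
    [69, blk 1 (acc.getD 9 0), blk 3 (acc.getD 4 0), blk 4 (acc.getD 6 0),
      blk 5 (acc.getD 17 0)]])


theorem ite'_eq {α : Type} (b : Bool) (x y : α) : ite' b x y = if b then x else y := by
  cases b <;> rfl

theorem forceL_eq {α : Type} (l : List Nat) (k : List Nat → α) : forceL l k = k l := by
  induction l generalizing k with
  | nil => rfl
  | cons b l ih =>
    have : forceL (b :: l) k = force b fun b' => forceL l fun l' => k (b' :: l') := rfl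
    rw [this, force_eq, ih]

theorem forceLL_eq {α : Type} (l : List (List Nat)) (k : List (List Nat) → α) :
    forceLL l k = k l := by
  induction l generalizing k with
  | nil => rfl
  | cons b l ih =>
    have : forceLL (b :: l) k = forceL b fun b' => forceLL l fun l' => k (b' :: l') := rfl
    rw [this, forceL_eq, ih]

theorem step_sound (S : Nat) (k : Nat → Nat → Bool) (es : List (Nat × Nat))
    (h : step S k es = true) (e : Nat × Nat) (he : e ∈ es) (hd : Nat.land S e.2 = 0) :
    k (Nat.lor S e.2) e.1 = true := by
  induction es with
  | nil => simp at he
  | cons a es ih =>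
    have h' : step S k (a :: es) = ite' (Nat.beq (Nat.land S a.2) 0)
      (ite' (force (Nat.lor S a.2) (fun S' => k S' a.1)) (step S k es) false) (step S k es) := rfl
    rw [h', ite'_eq, ite'_eq, force_eq] at h
    rcases List.mem_cons.1 he with rfl | he
    · rw [hd] at h
      simp at h
      exact h.1
    · apply ih _ he
      split_ifs at h <;> simp_all

theorem search_sound (ck : List Nat → Bool) (E : Nat → Nat → Nat)
    (l : List (Nat × Nat × List Nat)) (S : Nat) (acc : List Nat)
    (h : search ck (l.map mk) S acc = true)
    (hm : ∀ c ∈ l, E c.1 c.2.1 ∈ c.2.2)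
    (hS : ∀ c ∈ l, S &&& cellMask c.1 c.2.1 (E c.1 c.2.1) = 0)
    (hp : l.Pairwise fun c c' =>
      cellMask c.1 c.2.1 (E c.1 c.2.1) &&& cellMask c'.1 c'.2.1 (E c'.1 c'.2.1) = 0) :
    ck ((l.map fun c => E c.1 c.2.1).reverse ++ acc) = true := by
  induction l generalizing S acc with
  | nil => simpa [search] using h
  | cons c l ih =>
    have h1 : step S (fun S' e => search ck (l.map mk) S' (e :: acc)) (mk c) = true := h
    have h2 := step_sound _ _ _ h1 (E c.1 c.2.1, cellMask c.1 c.2.1 (E c.1 c.2.1))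
      (by simp only [mk, List.mem_map]; exact ⟨_, hm c (by simp), rfl⟩) (hS c (by simp))
    rw [List.pairwise_cons] at hp
    have h3 := ih _ _ h2 (fun c' hc' => hm c' (by simp [hc'])) (fun c' hc' => ?_) hp.2
    · simpa using h3
    · have e1 := hS c' (by simp [hc'])
      have e2 := hp.1 c' hc'
      show (S ||| _) &&& _ = 0
      rw [Nat.and_or_distrib_right, e1, e2]; rfl

/-- number of entries of `w` containing point `q+1` -/
def cnt (q : Nat) (w : List Nat) : Nat := w.countP fun b => (b / 2).testBit q

def Inv (o t : Nat) (w : List Nat) : Prop := ∀ q,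
  (t.testBit q = true → o.testBit q = false ∧ cnt q w = 0) ∧
  (t.testBit q = false → o.testBit q = true → cnt q w = 1) ∧
  (t.testBit q = false → o.testBit q = false → cnt q w = 0 ∨ cnt q w = 2)

theorem Inv.cons {o t b : Nat} {w : List Nat} (h : Inv o t (b :: w)) :
    t &&& (b / 2) = 0 ∧ Inv (o ^^^ (b / 2)) (t ||| (o &&& (b / 2))) w := by
  have hc : ∀ q, cnt q (b :: w) = cnt q w + if (b / 2).testBit q then 1 else 0 := by
    intro q; simp only [cnt, List.countP_cons]
  constructor
  · apply Nat.eq_of_testBit_eq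
    intro q
    have := h q
    rw [hc] at this
    rw [Nat.testBit_and, Nat.zero_testBit]
    cases h1 : t.testBit q <;> cases h2 : (b / 2).testBit q <;> simp_all
  · intro q
    have := h q
    rw [hc] at this
    simp only [Nat.testBit_or, Nat.testBit_and, Nat.testBit_xor]
    cases h1 : t.testBit q <;> cases h2 : (b / 2).testBit q <;> cases h3 : o.testBit q <;>
      simp_all

abbrev Fin' := Nat → Nat → List Nat → List (List Nat) → List (List Nat)

/-- inner loop of `words` -/
def wstep (ih : Fin') (ones twos : Nat) (path : List Nat) (out : List (List Nat)) (bs : List Nat) :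
    List (List Nat) :=
  List.rec out (fun b _ ihb =>
      ite' (Nat.beq (Nat.land twos (Nat.div b 2)) 0)
        (force (Nat.xor ones (Nat.div b 2)) fun o =>
          force (Nat.lor twos (Nat.land ones (Nat.div b 2))) fun t =>
            ih o t (b :: path) ihb) ihb) bs

theorem wstep_cons (ih : Fin') (ones twos : Nat) (path : List Nat) (out : List (List Nat))
    (b : Nat) (bs : List Nat) : wstep ih ones twos path out (b :: bs) =
    if twos &&& (b / 2) = 0 then
      ih (ones ^^^ (b / 2)) (twos ||| (ones &&& (b / 2))) (b :: path)
        (wstep ih ones twos path out bs)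
    else wstep ih ones twos path out bs := by
  have : wstep ih ones twos path out (b :: bs) = ite' (Nat.beq (Nat.land twos (Nat.div b 2)) 0)
        (force (Nat.xor ones (Nat.div b 2)) fun o =>
          force (Nat.lor twos (Nat.land ones (Nat.div b 2))) fun t =>
            ih o t (b :: path) (wstep ih ones twos path out bs))
            (wstep ih ones twos path out bs) := rfl
  rw [this, ite'_eq, force_eq, force_eq]
  have : (Nat.beq (Nat.land twos (Nat.div b 2)) 0 = true) ↔ twos &&& (b / 2) = 0 :=
    Nat.beq_eq.to_iff
  simp only [this]
  rfl

theorem words_cons (fin : Fin') (bs : List Nat) (l : List (List Nat)) (o t : Nat) (path : List Nat)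
    (out : List (List Nat)) :
    words fin (bs :: l) o t path out = wstep (words fin l) o t path out bs := rfl

theorem wstep_mono (ih : Fin') (hi : ∀ o t p out, out ⊆ ih o t p out) (o t : Nat) (path : List Nat)
    (out : List (List Nat)) (bs : List Nat) : out ⊆ wstep ih o t path out bs := by
  induction bs with
  | nil => exact fun _ h => h
  | cons b bs ihb =>
    rw [wstep_cons]
    split_ifs
    · exact fun x hx => hi _ _ _ _ (ihb hx)
    · exact ihb

theorem words_mono (fin : Fin') (hf : ∀ o t p out, out ⊆ fin o t p out) (l : List (List Nat)) :
    ∀ o t p out, out ⊆ words fin l o t p out := by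
  induction l with
  | nil => exact hf
  | cons bs l ih =>
    intro o t p out
    rw [words_cons]
    exact wstep_mono _ ih _ _ _ _ _

theorem wstep_sound (ih : Fin') (hi : ∀ o t p out, out ⊆ ih o t p out) (o t : Nat)
    (path : List Nat) (out : List (List Nat)) (bs : List Nat) (b : Nat) (hb : b ∈ bs)
    (ht : t &&& (b / 2) = 0) (x : List Nat)
    (hx : ∀ out, x ∈ ih (o ^^^ (b / 2)) (t ||| (o &&& (b / 2))) (b :: path) out) :
    x ∈ wstep ih o t path out bs := by
  induction bs with
  | nil => simp at hb
  | cons b' bs ihb =>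
    rw [wstep_cons]
    rcases List.mem_cons.1 hb with rfl | hb
    · rw [if_pos ht]; exact hx _
    · split_ifs
      · exact hi _ _ _ _ (ihb hb)
      · exact ihb hb

theorem words_sound (fin : Fin') (hf : ∀ o t p out, out ⊆ fin o t p out) (w2 : List Nat)
    (hfin : ∀ o t p out, Inv o t w2 → w2.reverse ++ p ∈ fin o t p out)
    (w : List Nat) (l : List (List Nat)) (hw : List.Forall₂ (· ∈ ·) w l) :
    ∀ o t p out, Inv o t (w ++ w2) → (w ++ w2).reverse ++ p ∈ words fin l o t p out := by
  induction hw with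
  | nil => exact hfin
  | @cons b bs w l hb _ ih =>
    intro o t p out hI
    rw [words_cons]
    rw [List.cons_append] at hI
    refine wstep_sound _ (words_mono _ hf _) _ _ _ _ _ b hb hI.cons.1 _ fun out => ?_
    have := ih _ _ (b :: p) out hI.cons.2
    simpa using this

theorem fin0_mono : ∀ o t p out, out ⊆ fin0 o t p out := by
  intro o t p out
  rw [fin0, ite'_eq]
  split_ifs <;> simp

theorem fin0_sound (o t : Nat) (p : List Nat) (out : List (List Nat)) (h : Inv o t []) :
    p ∈ fin0 o t p out := by
  have : o = 0 := by
    apply Nat.eq_of_testBit_eq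
    intro q
    have := h q
    rw [Nat.zero_testBit]
    simp only [cnt, List.countP_nil] at this
    cases h1 : t.testBit q <;> cases h3 : o.testBit q <;> simp_all
  subst this
  simp [fin0, ite'_eq]

def rstep (ih : Nat → Nat → Nat) (o R : Nat) (bs : List Nat) : Nat :=
  List.rec R (fun b _ R' => force R' fun R'' => force (Nat.xor o (Nat.div b 2)) fun o' =>
    ih o' R'') bs

theorem rstep_cons (ih : Nat → Nat → Nat) (o R b : Nat) (bs : List Nat) :
    rstep ih o R (b :: bs) = ih (o ^^^ (b / 2)) (rstep ih o R bs) := by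
  have : rstep ih o R (b :: bs) = force (rstep ih o R bs) fun R'' =>
    force (Nat.xor o (Nat.div b 2)) fun o' => ih o' R'' := rfl
  rw [this, force_eq, force_eq]; rfl

theorem reach_cons (bs : List Nat) (l : List (List Nat)) (o R : Nat) :
    reach (bs :: l) o R = rstep (reach l) o R bs := rfl

theorem rstep_mono (ih : Nat → Nat → Nat) (i : Nat)
    (hi : ∀ o R, R.testBit i = true → (ih o R).testBit i = true) (o R : Nat)
    (h : R.testBit i = true) (bs : List Nat) : (rstep ih o R bs).testBit i = true := by
  induction bs with
  | nil => exact h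
  | cons b bs ihb => rw [rstep_cons]; exact hi _ _ ihb

theorem reach_mono (l : List (List Nat)) (i : Nat) :
    ∀ o R, R.testBit i = true → (reach l o R).testBit i = true := by
  induction l with
  | nil =>
    intro o R h
    show (R ||| _).testBit i = true
    rw [Nat.testBit_or, h]; rfl
  | cons bs l ih => intro o R h; rw [reach_cons]; exact rstep_mono _ _ ih _ _ h _

theorem rstep_sound (ih : Nat → Nat → Nat) (i : Nat)
    (hi : ∀ o R, R.testBit i = true → (ih o R).testBit i = true) (o R b : Nat) (bs : List Nat)
    (hb : b ∈ bs) (h : ∀ R, (ih (o ^^^ (b / 2)) R).testBit i = true) :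
    (rstep ih o R bs).testBit i = true := by
  induction bs with
  | nil => simp at hb
  | cons b' bs ihb =>
    rw [rstep_cons]
    rcases List.mem_cons.1 hb with rfl | hb
    · exact h _
    · exact hi _ _ (ihb hb)

def xors (w : List Nat) : Nat := w.foldr (fun b r => (b / 2) ^^^ r) 0

theorem reach_sound (w : List Nat) (l : List (List Nat)) (hw : List.Forall₂ (· ∈ ·) w l) :
    ∀ o R, (reach l o R).testBit (o ^^^ xors w) = true := by
  induction hw with
  | nil =>
    intro o R
    show (R ||| (1 <<< o)).testBit (o ^^^ 0) = true
    simp [Nat.testBit_or, Nat.testBit_shiftLeft]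
  | @cons b bs w l hb _ ih =>
    intro o R
    rw [reach_cons]
    refine rstep_sound _ _ (reach_mono _ _) _ _ b _ hb fun R => ?_
    have := ih (o ^^^ (b / 2)) R
    rwa [Nat.xor_assoc] at this

theorem xors_testBit (w : List Nat) (q : Nat) :
    (xors w).testBit q = decide (cnt q w % 2 = 1) := by
  induction w with
  | nil => simp [xors, cnt]
  | cons b w ih =>
    have : xors (b :: w) = (b / 2) ^^^ xors w := rfl
    rw [this, Nat.testBit_xor, ih]
    simp only [cnt, List.countP_cons]
    cases h : (b / 2).testBit q
    · simp only [Bool.false_xor]; simp; rfl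
    · simp only [if_true]
      by_cases h : List.countP (fun b => (b / 2).testBit q) w % 2 = 1
      · have : (List.countP (fun b => (b / 2).testBit q) w + 1) % 2 = 0 := by omega
        simp [h, this]
      · have : (List.countP (fun b => (b / 2).testBit q) w + 1) % 2 = 1 := by omega
        simp [h, this]

theorem allWords_sound (front back : List (List Nat)) (w1 w2 : List Nat)
    (h1 : List.Forall₂ (· ∈ ·) w1 front) (h2 : List.Forall₂ (· ∈ ·) w2 back)
    (h : ∀ q, cnt q (w1 ++ w2) = 0 ∨ cnt q (w1 ++ w2) = 2) :
    (w1 ++ w2).reverse ∈ allWords front back := by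
  rw [allWords, forceLL_eq, forceLL_eq, force_eq]
  have := words_sound (fun ones twos path out =>
    ite' (Nat.beq (Nat.land (Nat.shiftRight (reach back 0 0) ones) 1) 1)
      (words fin0 back ones twos path out) out) ?_ w2 ?_ w1 front h1 0 0 [] [] ?_
  · simpa using this
  · intro o t p out
    rw [ite'_eq]
    split_ifs
    · exact words_mono _ fin0_mono _ _ _ _ _
    · exact fun _ h => h
  · intro o t p out hI
    have ho : o = xors w2 := by
      apply Nat.eq_of_testBit_eq
      intro q
      rw [xors_testBit]
      have := hI q
      cases h1 : t.testBit q <;> cases h3 : o.testBit q <;> simp_all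
      omega
    have hr := reach_sound w2 back h2 0 0
    rw [Nat.zero_xor, ← ho] at hr
    have hb : Nat.beq (Nat.land (Nat.shiftRight (reach back 0 0) o) 1) 1 = true := by
      rw [Nat.beq_eq]
      show (reach back 0 0 >>> o) &&& 1 = 1
      rw [Nat.and_one_is_mod, Nat.shiftRight_eq_div_pow]
      simpa [Nat.testBit_eq_decide_div_mod_eq] using hr
    rw [ite'_eq, hb, if_pos rfl]
    have := words_sound fin0 fin0_mono [] (fun o t p out h => fin0_sound o t p out h) w2 back h2
      o t p out (by simpa using hI)
    simpa using this
  · intro q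
    simp only [Nat.zero_testBit]
    simpa using h q

set_option maxRecDepth 100000 in
theorem search_ok : search chk (spec.map mk) 0 [] = true := by decide +kernel

end KTS
end

section
namespace KTS

theorem edge_lt : ∀ e ∈ allEdges, e < 256 := by decide

theorem edge_bit {e i : ℕ} (he : e ∈ allEdges) (h : e.testBit i = true) : i < 8 := by
  by_contra hi
  have : e < 2 ^ i := lt_of_lt_of_le (edge_lt e he)
    (by rw [show 256 = 2 ^ 8 by norm_num]; exact Nat.pow_le_pow_right (by norm_num) (by omega))
  rw [Nat.testBit_lt_two_pow this] at h
  exact absurd h (by simp)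

theorem cellMask_bit {d f e i : ℕ} (h : (cellMask d f e).testBit i = true) :
    (8 * f ≤ i ∧ e.testBit (i - 8 * f) = true) ∨
    (8 * (7 + d) ≤ i ∧ e.testBit (i - 8 * (7 + d)) = true) ∨ i = 112 + e := by
  have h' : ((e <<< (8 * f)) ||| ((e <<< (8 * (7 + d))) ||| (1 <<< (112 + e)))).testBit i = true := h
  simp only [Nat.testBit_or, Nat.testBit_shiftLeft, Bool.or_eq_true, Bool.and_eq_true,
    decide_eq_true_eq, Nat.testBit_one_eq_true_iff_self_eq_zero] at h'
  rcases h' with h' | h' | h'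
  · exact Or.inl h'
  · exact Or.inr (Or.inl h')
  · right; right; omega

theorem and_zero_bit {e e' i : ℕ} (h : e &&& e' = 0) (h1 : e.testBit i = true)
    (h2 : e'.testBit i = true) : False := by
  have := congrArg (fun n => n.testBit i) h
  simp [Nat.testBit_and, h1, h2] at this

theorem cell_disj {d f e d' f' e' : ℕ} (hd7 : d < 7) (hf7 : f < 7) (hd7' : d' < 7) (hf7' : f' < 7)
    (he : e ∈ allEdges) (he' : e' ∈ allEdges)
    (hne : e ≠ e') (hf : f = f' → e &&& e' = 0) (hd : d = d' → e &&& e' = 0) :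
    cellMask d f e &&& cellMask d' f' e' = 0 := by
  apply Nat.eq_of_testBit_eq
  intro i
  rw [Nat.testBit_and, Nat.zero_testBit, Bool.and_eq_false_iff]
  by_contra hc
  push Not at hc
  simp only [ne_eq, Bool.not_eq_false] at hc
  rcases cellMask_bit hc.1 with ⟨a1, a2⟩ | ⟨a1, a2⟩ | a1 <;>
  rcases cellMask_bit hc.2 with ⟨b1, b2⟩ | ⟨b1, b2⟩ | b1
  · have := edge_bit he a2
    have := edge_bit he' b2
    have e1 : f = f' := by omega
    subst e1
    exact and_zero_bit (hf rfl) a2 b2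
  · have := edge_bit he a2
    have := edge_bit he' b2
    omega
  · have := edge_bit he a2
    omega
  · have := edge_bit he a2
    have := edge_bit he' b2
    omega
  · have := edge_bit he a2
    have := edge_bit he' b2
    have e1 : d = d' := by omega
    subst e1
    exact and_zero_bit (hd rfl) a2 b2
  · have := edge_bit he a2
    omega
  · have := edge_bit he' b2
    omega
  · have := edge_bit he' b2
    omega
  · omega

/-- `f` is not on the line `{d, d+1, d+3}` -/
def Off (d f : Fin 7) : Prop := f ≠ d ∧ f ≠ d + 1 ∧ f ≠ d + 3

instance : DecidableRel Off := fun d f => by unfold Off; infer_instance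

/-- A Kirkman triple system in normal form. -/
structure Normal (xF : Fin 7 → Fin 7 → Fin 5) (xZ : Fin 8 → Fin 7 → Fin 5) : Prop where
  FF : ∀ f f' d d', f ≠ f' → xF f d = xF f' d → xF f d' = xF f' d' → d = d'
  FZ : ∀ f z d d', xF f d = xZ z d → xF f d' = xZ z d' → d = d'
  ZZ : ∀ z z' d d', z ≠ z' → xZ z d = xZ z' d → xZ z d' = xZ z' d' → d = d'
  three : ∀ d γ, (Finset.univ.filter fun f => xF f d = γ).card +
    (Finset.univ.filter fun z => xZ z d = γ).card = 3
  even : ∀ d γ, (Finset.univ.filter fun z => xZ z d = γ).card = 0 ∨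
    (Finset.univ.filter fun z => xZ z d = γ).card = 2
  l1 : ∀ d, xF (d + 1) d = xF d d
  l3 : ∀ d, xF (d + 3) d = xF d d
  z0 : xZ 0 0 = xF 2 0
  z1 : xZ 1 0 = xF 2 0
  z2 : xZ 2 0 = xF 4 0
  z3 : xZ 3 0 = xF 4 0
  z4 : xZ 4 0 = xF 5 0
  z5 : xZ 5 0 = xF 5 0
  z6 : xZ 6 0 = xF 6 0
  z7 : xZ 7 0 = xF 6 0
  m34 : ∃ d, xZ 3 d = xF 2 d ∧ xZ 4 d = xF 2 d
  m56 : ∃ d, xZ 5 d = xF 2 d ∧ xZ 6 d = xF 2 d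
  m72 : ∃ d, xZ 7 d = xF 2 d ∧ xZ 2 d = xF 2 d

theorem off_line : ∀ d f f' : Fin 7, f ≠ f' → Off d f → Off d f' → ∃ d', d' ≠ d ∧
    (f = d' ∨ f = d' + 1 ∨ f = d' + 3) ∧ (f' = d' ∨ f' = d' + 1 ∨ f' = d' + 3) := by decide

theorem off_card : ∀ d f : Fin 7, Off d f → ({d, d + 1, d + 3, f} : Finset (Fin 7)).card = 4 := by
  decide

variable {xF : Fin 7 → Fin 7 → Fin 5} {xZ : Fin 8 → Fin 7 → Fin 5}

theorem Normal.line (N : Normal xF xZ) {d f : Fin 7} (h : f = d ∨ f = d + 1 ∨ f = d + 3) :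
    xF f d = xF d d := by
  rcases h with rfl | rfl | rfl
  · rfl
  · exact N.l1 _
  · exact N.l3 _

theorem Normal.off_ne (N : Normal xF xZ) {d f f' : Fin 7} (h : Off d f) (h' : Off d f')
    (he : xF f d = xF f' d) : f = f' := by
  by_contra hne
  obtain ⟨d', hd', h1, h2⟩ := off_line d f f' hne h h'
  exact hd' (N.FF f f' d' d hne ((N.line h1).trans (N.line h2).symm) he)

theorem Normal.off_iff (N : Normal xF xZ) {d f : Fin 7} : Off d f ↔ xF f d ≠ xF d d := by
  constructor
  · intro h he
    have hc := N.three d (xF d d)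
    have hs : ({d, d + 1, d + 3, f} : Finset (Fin 7)) ⊆
        Finset.univ.filter fun g => xF g d = xF d d := by
      intro g hg
      simp only [Finset.mem_insert, Finset.mem_singleton] at hg
      simp only [Finset.mem_filter, Finset.mem_univ, true_and]
      rcases hg with rfl | rfl | rfl | rfl
      · rfl
      · exact N.l1 _
      · exact N.l3 _
      · exact he
    have h4 : ({d, d + 1, d + 3, f} : Finset (Fin 7)).card = 4 := off_card d f h
    have := Finset.card_le_card hs
    omega
  · intro h
    refine ⟨?_, ?_, ?_⟩ <;> rintro rfl
    · exact h rfl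
    · exact h (N.l1 _)
    · exact h (N.l3 _)

theorem Normal.cardF (N : Normal xF xZ) {d f : Fin 7} (h : Off d f) :
    (Finset.univ.filter fun g => xF g d = xF f d) = {f} := by
  ext g
  simp only [Finset.mem_filter, Finset.mem_univ, true_and, Finset.mem_singleton]
  constructor
  · intro he
    have : Off d g := by
      rw [N.off_iff, he]; exact N.off_iff.1 h
    exact N.off_ne this h he
  · rintro rfl; rfl

theorem edge_ex : ∀ z1 z2 : Fin 8, z1 ≠ z2 → ∃ e ∈ allEdges, ∀ z : Fin 8,
    e.testBit z = decide (z ∈ ({z1, z2} : Finset (Fin 8))) := by decide +kernel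

theorem Normal.edge (N : Normal xF xZ) (d f : Fin 7) : ∃ e, Off d f →
    e ∈ allEdges ∧ ∀ z : Fin 8, e.testBit z = decide (xZ z d = xF f d) := by
  by_cases h : Off d f
  · have h1 := N.three d (xF f d)
    rw [N.cardF h, Finset.card_singleton] at h1
    have h2 : (Finset.univ.filter fun z => xZ z d = xF f d).card = 2 := by omega
    obtain ⟨z1, z2, hne, hz⟩ := Finset.card_eq_two.1 h2
    obtain ⟨e, he, hb⟩ := edge_ex z1 z2 hne
    refine ⟨e, fun _ => ⟨he, fun z => ?_⟩⟩
    rw [hb, ← hz]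
    simp
  · exact ⟨0, fun h' => absurd h' h⟩

theorem edge_uniq : ∀ e ∈ allEdges, ∀ e' ∈ allEdges, ∀ z z' : Fin 8, z ≠ z' →
    e.testBit z = true → e.testBit z' = true → e'.testBit z = true → e'.testBit z' = true →
    e = e' := by decide +kernel

theorem edge_two : ∀ e ∈ allEdges, ∃ z z' : Fin 8, z ≠ z' ∧
    e.testBit z = true ∧ e.testBit z' = true := by decide +kernel

theorem blk_bit : ∀ f : Fin 7, ∀ e ∈ allEdges, (∀ g : Fin 7, (blk f e).testBit g = decide (g = f)) ∧
    (∀ z : Fin 8, (blk f e).testBit (7 + z) = e.testBit z) ∧ blk f e < 2 ^ 15 := by decide +kernel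

def lineMask (d : Fin 7) : ℕ := ([11, 22, 44, 88, 49, 98, 69] : List ℕ).getD d 0

theorem line_bit : ∀ d : Fin 7, (∀ g : Fin 7, (lineMask d).testBit g = !decide (Off d g)) ∧
    (∀ z : Fin 8, (lineMask d).testBit (7 + z) = false) ∧ lineMask d < 2 ^ 15 := by decide +kernel

def offs (d : Fin 7) : List (Fin 7) := (List.finRange 7).filter fun f => Off d f

def dayList (E : ℕ → ℕ → ℕ) (d : Fin 7) : List ℕ :=
  lineMask d :: (offs d).map fun f : Fin 7 => blk f (E d f)

theorem chk_eq (E : ℕ → ℕ → ℕ) : chk ((spec.map fun c => E c.1 c.2.1).reverse ++ []) =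
    good (allWords [dayList E 0, dayList E 1, dayList E 2, dayList E 3]
      [dayList E 4, dayList E 5, dayList E 6]) := by
  have h0 : offs 0 = [2, 4, 5, 6] := by decide
  have h1 : offs 1 = [0, 3, 5, 6] := by decide
  have h2 : offs 2 = [0, 1, 4, 6] := by decide
  have h3 : offs 3 = [0, 1, 2, 5] := by decide
  have h4 : offs 4 = [1, 2, 3, 6] := by decide
  have h5 : offs 5 = [0, 2, 3, 4] := by decide
  have h6 : offs 6 = [1, 3, 4, 5] := by decide
  simp only [dayList, h0, h1, h2, h3, h4, h5, h6]
  rfl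

theorem spec_ok : ∀ c ∈ spec, c.1 < 7 ∧ c.2.1 < 7 ∧ Off (Fin.ofNat 7 c.1) (Fin.ofNat 7 c.2.1) := by
  decide +kernel

theorem spec_nodup : (spec.map fun c => (c.1, c.2.1)).Nodup := by decide +kernel

/-- Every relevant cell. -/
theorem spec_opts : ∀ c ∈ spec, c.2.2 = allEdges ∨ (c.1 = 0 ∧ c.2.1 = 2 ∧ c.2.2 = [3]) ∨
    (c.1 = 0 ∧ c.2.1 = 4 ∧ c.2.2 = [12]) ∨ (c.1 = 0 ∧ c.2.1 = 5 ∧ c.2.2 = [48]) ∨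
    (c.1 = 0 ∧ c.2.1 = 6 ∧ c.2.2 = [192]) ∨
    (c.1 ≠ 0 ∧ c.2.1 = 2 ∧ c.2.2 = [24, 96, 132]) := by decide +kernel

theorem mu_edge : ∀ e ∈ allEdges, e ∉ ([24, 96, 132] : List ℕ) → e.testBit (0 : Fin 8) = false →
    e.testBit (1 : Fin 8) = false → ∃ z z' : Fin 8, (z, z') ∈ ([(3, 4), (4, 3), (5, 6), (6, 5), (7, 2), (2, 7)] :
      List (Fin 8 × Fin 8)) ∧ e.testBit z = true ∧ e.testBit z' = false := by decide +kernel

theorem Normal.search (N : Normal xF xZ) : ∃ E : ℕ → ℕ → ℕ,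
    (∀ d f : Fin 7, Off d f →
      E d f ∈ allEdges ∧ ∀ z : Fin 8, (E d f).testBit z = decide (xZ z d = xF f d)) ∧
    good (allWords [dayList E 0, dayList E 1, dayList E 2, dayList E 3]
      [dayList E 4, dayList E 5, dayList E 6]) = true := by
  choose E' hE' using N.edge
  let E : ℕ → ℕ → ℕ := fun d f => E' (Fin.ofNat 7 d) (Fin.ofNat 7 f)
  have hEE : ∀ d f : Fin 7, E d f = E' d f := by
    intro d f
    simp [E]
  refine ⟨E, ?_, ?_⟩
  · intro d f h
    rw [hEE]
    exact hE' d f h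
  rw [← chk_eq]
  refine search_sound chk E spec 0 [] search_ok ?_ (by simp) ?_
  · intro c hc
    obtain ⟨c1, c2, co⟩ := spec_ok c hc
    have hs := hE' _ _ co
    have hfix : ∀ e0 ∈ allEdges, ∀ z z' : Fin 8, z ≠ z' → e0.testBit z = true →
        e0.testBit z' = true → xZ z (Fin.ofNat 7 c.1) = xF (Fin.ofNat 7 c.2.1) (Fin.ofNat 7 c.1) →
        xZ z' (Fin.ofNat 7 c.1) = xF (Fin.ofNat 7 c.2.1) (Fin.ofNat 7 c.1) →
        E c.1 c.2.1 = e0 := by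
      intro e0 he0 z z' hne h1 h2 h3 h4
      exact edge_uniq _ hs.1 _ he0 z z' hne (by rw [hs.2]; simpa using h3)
        (by rw [hs.2]; simpa using h4) h1 h2
    rcases spec_opts c hc with h | ⟨h1, h2, h3⟩ | ⟨h1, h2, h3⟩ | ⟨h1, h2, h3⟩ | ⟨h1, h2, h3⟩ |
      ⟨h1, h2, h3⟩
    · rw [h]; exact hs.1
    · rw [h3, List.mem_singleton]
      rw [h1, h2] at hfix ⊢
      exact hfix 3 (by decide) 0 1 (by decide) (by decide) (by decide) N.z0 N.z1
    · rw [h3, List.mem_singleton]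
      rw [h1, h2] at hfix ⊢
      exact hfix 12 (by decide) 2 3 (by decide) (by decide) (by decide) N.z2 N.z3
    · rw [h3, List.mem_singleton]
      rw [h1, h2] at hfix ⊢
      exact hfix 48 (by decide) 4 5 (by decide) (by decide) (by decide) N.z4 N.z5
    · rw [h3, List.mem_singleton]
      rw [h1, h2] at hfix ⊢
      exact hfix 192 (by decide) 6 7 (by decide) (by decide) (by decide) N.z6 N.z7
    · rw [h3]
      by_contra hcon
      have hd0 : Fin.ofNat 7 c.1 ≠ 0 := by
        intro h0
        have := congrArg Fin.val h0
        simp at this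
        omega
      have hf2 : Fin.ofNat 7 c.2.1 = 2 := by rw [h2]; rfl
      have hb : ∀ z : Fin 8, (E c.1 c.2.1).testBit z = decide (xZ z (Fin.ofNat 7 c.1) =
          xF 2 (Fin.ofNat 7 c.1)) := by
        intro z
        have := hs.2 z
        rw [hf2] at this
        rw [← this]
        show (E' (Fin.ofNat 7 c.1) (Fin.ofNat 7 c.2.1)).testBit z = _
        rw [hf2]
      obtain ⟨z, z', hz, h5, h6⟩ := mu_edge _ hs.1 hcon
        (by
          have := hb 0
          rw [show E' (Fin.ofNat 7 c.1) (Fin.ofNat 7 c.2.1) = E c.1 c.2.1 from rfl, this]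
          simp only [decide_eq_false_iff_not]
          intro h
          exact hd0 (N.FZ 2 0 _ _ h.symm N.z0.symm))
        (by
          have := hb 1
          rw [show E' (Fin.ofNat 7 c.1) (Fin.ofNat 7 c.2.1) = E c.1 c.2.1 from rfl, this]
          simp only [decide_eq_false_iff_not]
          intro h
          exact hd0 (N.FZ 2 1 _ _ h.symm N.z1.symm))
      have h5' : xZ z (Fin.ofNat 7 c.1) = xF 2 (Fin.ofNat 7 c.1) := by
        have := hb z
        rw [show E c.1 c.2.1 = E' (Fin.ofNat 7 c.1) (Fin.ofNat 7 c.2.1) from rfl, h5] at this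
        simpa using this.symm
      have h6' : xZ z' (Fin.ofNat 7 c.1) ≠ xF 2 (Fin.ofNat 7 c.1) := by
        have := hb z'
        rw [show E c.1 c.2.1 = E' (Fin.ofNat 7 c.1) (Fin.ofNat 7 c.2.1) from rfl, h6] at this
        simpa using this.symm
      have key : ∀ a b : Fin 8, (∃ d, xZ a d = xF 2 d ∧ xZ b d = xF 2 d) →
          xZ a (Fin.ofNat 7 c.1) = xF 2 (Fin.ofNat 7 c.1) →
          xZ b (Fin.ofNat 7 c.1) = xF 2 (Fin.ofNat 7 c.1) := by
        rintro a b ⟨d, h7, h8⟩ h9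
        rw [N.FZ 2 a _ _ h9.symm h7.symm]
        exact h8
      simp only [List.mem_cons, Prod.mk.injEq, List.not_mem_nil, or_false] at hz
      have sw : ∀ a b : Fin 8, (∃ d, xZ a d = xF 2 d ∧ xZ b d = xF 2 d) →
        (∃ d, xZ b d = xF 2 d ∧ xZ a d = xF 2 d) := fun a b ⟨d, h1, h2⟩ => ⟨d, h2, h1⟩
      rcases hz with ⟨rfl, rfl⟩ | ⟨rfl, rfl⟩ | ⟨rfl, rfl⟩ | ⟨rfl, rfl⟩ | ⟨rfl, rfl⟩ | ⟨rfl, rfl⟩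
      · exact h6' (key _ _ N.m34 h5')
      · exact h6' (key _ _ (sw _ _ N.m34) h5')
      · exact h6' (key _ _ N.m56 h5')
      · exact h6' (key _ _ (sw _ _ N.m56) h5')
      · exact h6' (key _ _ N.m72 h5')
      · exact h6' (key _ _ (sw _ _ N.m72) h5')
  · have hp := List.pairwise_map.1 spec_nodup
    refine hp.imp_of_mem ?_
    intro c c' hc hc' hne
    obtain ⟨c1, c2, co⟩ := spec_ok c hc
    obtain ⟨c1', c2', co'⟩ := spec_ok c' hc'
    have hs := hE' _ _ co
    have hs' := hE' _ _ co'
    have hof : ∀ a b : ℕ, a < 7 → b < 7 → Fin.ofNat 7 a = Fin.ofNat 7 b → a = b := by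
      intro a b ha hb h
      have := congrArg Fin.val h
      simp at this
      omega
    have hdisj : (∀ z : Fin 8, ¬ (xZ z (Fin.ofNat 7 c.1) = xF (Fin.ofNat 7 c.2.1) (Fin.ofNat 7 c.1) ∧
        xZ z (Fin.ofNat 7 c'.1) = xF (Fin.ofNat 7 c'.2.1) (Fin.ofNat 7 c'.1))) →
        E c.1 c.2.1 &&& E c'.1 c'.2.1 = 0 := by
      intro h
      apply Nat.eq_of_testBit_eq
      intro i
      rw [Nat.testBit_and, Nat.zero_testBit, Bool.and_eq_false_iff]
      by_contra hcc
      push Not at hcc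
      simp only [ne_eq, Bool.not_eq_false] at hcc
      have hi := edge_bit hs.1 hcc.1
      refine h ⟨i, hi⟩ ⟨?_, ?_⟩
      · have h1 := hs.2 ⟨i, hi⟩
        have h2 : (E' (Fin.ofNat 7 c.1) (Fin.ofNat 7 c.2.1)).testBit i = true := hcc.1
        rw [h2] at h1
        simpa using h1.symm
      · have h1 := hs'.2 ⟨i, hi⟩
        have h2 : (E' (Fin.ofNat 7 c'.1) (Fin.ofNat 7 c'.2.1)).testBit i = true := hcc.2
        rw [h2] at h1
        simpa using h1.symm
    have hdd : c.1 = c'.1 → ∀ z : Fin 8, ¬ (xZ z (Fin.ofNat 7 c.1) = xF (Fin.ofNat 7 c.2.1) (Fin.ofNat 7 c.1) ∧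
        xZ z (Fin.ofNat 7 c'.1) = xF (Fin.ofNat 7 c'.2.1) (Fin.ofNat 7 c'.1)) := by
      rintro h z ⟨h1, h2⟩
      rw [← h] at h2 co'
      have := hof _ _ c2 c2' (N.off_ne co co' (h1.symm.trans h2))
      exact hne (by rw [h, this])
    apply cell_disj c1 c2 c1' c2' hs.1 hs'.1
    · intro he
      obtain ⟨z, z', hz, h1, h2⟩ := edge_two _ hs.1
      have h1' := h1
      have h2' := h2
      rw [he, hs'.2] at h1' h2'
      rw [hs.2] at h1 h2
      simp only [decide_eq_true_eq] at h1 h2 h1' h2'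
      have : c.1 = c'.1 := hof _ _ c1 c1' (N.ZZ z z' _ _ hz (h1.trans h2.symm) (h1'.trans h2'.symm))
      exact hdd this z ⟨h1, h1'⟩
    · intro hf
      apply hdisj
      rintro z ⟨h1, h2⟩
      rw [← hf] at h2
      have : c.1 = c'.1 := hof _ _ c1 c1' (N.FZ _ z _ _ h1.symm h2.symm)
      exact hne (by rw [this, hf])
    · intro hd
      exact hdisj (hdd hd)

end KTS
end

section
namespace KTS
variable {xF : Fin 7 → Fin 7 → Fin 5} {xZ : Fin 8 → Fin 7 → Fin 5}

/-- A mask represents the block of symbol `γ` on day `d`. -/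
def Rep (xF : Fin 7 → Fin 7 → Fin 5) (xZ : Fin 8 → Fin 7 → Fin 5) (d : Fin 7) (γ : Fin 5) (b : ℕ) :
    Prop := (∀ g : Fin 7, b.testBit g = decide (xF g d = γ)) ∧
    (∀ z : Fin 8, b.testBit (7 + z) = decide (xZ z d = γ)) ∧ b < 2 ^ 15

theorem Normal.cover (N : Normal xF xZ) (E : ℕ → ℕ → ℕ) (hE : ∀ d f : Fin 7, Off d f →
      E d f ∈ allEdges ∧ ∀ z : Fin 8, (E d f).testBit z = decide (xZ z d = xF f d))
    (d : Fin 7) (γ : Fin 5) : ∃ b ∈ dayList E d, Rep xF xZ d γ b := by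
  by_cases hγ : γ = xF d d
  · subst hγ
    obtain ⟨h1, h2, h3⟩ := line_bit d
    refine ⟨lineMask d, by simp [dayList], fun g => ?_, fun z => ?_, h3⟩
    · rw [h1]
      have := N.off_iff (d := d) (f := g)
      by_cases h : xF g d = xF d d
      · simp [this, h]
      · simp [this, h]
    · rw [h2]
      have hc := N.three d (xF d d)
      have he := N.even d (xF d d)
      have hs : ({d, d + 1, d + 3} : Finset (Fin 7)) ⊆
          Finset.univ.filter fun g => xF g d = xF d d := by
        intro g hg
        simp only [Finset.mem_insert, Finset.mem_singleton] at hg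
        simp only [Finset.mem_filter, Finset.mem_univ, true_and]
        exact N.line hg
      have h3 : ∀ d : Fin 7, ({d, d + 1, d + 3} : Finset (Fin 7)).card = 3 := by decide
      have h4 := Finset.card_le_card hs
      rw [h3] at h4
      have h5 : (Finset.univ.filter fun z => xZ z d = xF d d).card = 0 := by omega
      rw [Finset.card_eq_zero, Finset.filter_eq_empty_iff] at h5
      simpa using h5 (Finset.mem_univ z)
  · have h3 := N.three d γ
    have he := N.even d γ
    have : 0 < (Finset.univ.filter fun f => xF f d = γ).card := by omega
    obtain ⟨f, hf⟩ := Finset.card_pos.1 this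
    simp only [Finset.mem_filter, Finset.mem_univ, true_and] at hf
    subst hf
    have ho : Off d f := N.off_iff.2 hγ
    obtain ⟨e1, e2⟩ := hE d f ho
    obtain ⟨b1, b2, b3⟩ := blk_bit f _ e1
    refine ⟨blk f (E d f), ?_, fun g => ?_, fun z => ?_, b3⟩
    · simp only [dayList, List.mem_cons, List.mem_map, offs, List.mem_filter, List.mem_finRange,
        true_and]
      right
      exact ⟨f, by simpa using ho, rfl⟩
    · rw [b1]
      have := N.cardF ho
      have h := Finset.ext_iff.1 this g
      simp only [Finset.mem_filter, Finset.mem_univ, true_and, Finset.mem_singleton] at h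
      simp [h]
    · rw [b2, e2]

theorem Rep.inj (N : Normal xF xZ) {d : Fin 7} {γ γ' : Fin 5} {b : ℕ} (h : Rep xF xZ d γ b)
    (h' : Rep xF xZ d γ' b) : γ = γ' := by
  have h3 := N.three d γ
  have he := N.even d γ
  have : 0 < (Finset.univ.filter fun f => xF f d = γ).card := by omega
  obtain ⟨f, hf⟩ := Finset.card_pos.1 this
  simp only [Finset.mem_filter, Finset.mem_univ, true_and] at hf
  have h1 := h.1 f
  rw [h'.1 f, hf] at h1
  simp at h1
  exact h1

def lst (B : Fin 7 → ℕ) : List ℕ := [B 0, B 1, B 2, B 3, B 4, B 5, B 6]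

theorem countP_lst (B : Fin 7 → ℕ) (p : ℕ → Bool) :
    (lst B).countP p = (Finset.univ.filter fun d => p (B d) = true).card := by
  rw [Finset.card_filter, Fin.sum_univ_seven]
  simp only [lst, List.countP_cons, List.countP_nil]
  omega

theorem lst_inj {B B' : Fin 7 → ℕ} (h : lst B = lst B') : B = B' := by
  simp only [lst, List.cons.injEq] at h
  obtain ⟨h0, h1, h2, h3, h4, h5, h6, -⟩ := h
  funext d
  fin_cases d <;> assumption

theorem normal_bound (N : Normal xF xZ) (X : Finset (Fin 7 → Fin 5))
    (hF : ∀ u ∈ X, ∀ f : Fin 7, f ≠ 0 → (Finset.univ.filter fun d => xF f d = u d).card = 0 ∨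
      (Finset.univ.filter fun d => xF f d = u d).card = 2)
    (hZ : ∀ u ∈ X, ∀ z : Fin 8, (Finset.univ.filter fun d => xZ z d = u d).card = 0 ∨
      (Finset.univ.filter fun d => xZ z d = u d).card = 2) :
    X.card ≤ 8 ∧ ((∀ u ∈ X, (Finset.univ.filter fun d => xF 0 d = u d).card = 1) → X.card ≤ 3) := by
  obtain ⟨E, hE, hg⟩ := N.search
  choose B hB hR using N.cover E hE
  let L : (Fin 7 → Fin 5) → List ℕ := fun u => (lst fun d => B d (u d)).reverse
  have hinj : Function.Injective L := by
    intro u v h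
    have := lst_inj (List.reverse_injective h)
    funext d
    have hd := congrFun this d
    have h1 := hR d (u d)
    rw [show B d (u d) = B d (v d) from hd] at h1
    exact Rep.inj N h1 (hR d (v d))
  set W := allWords [dayList E 0, dayList E 1, dayList E 2, dayList E 3]
      [dayList E 4, dayList E 5, dayList E 6] with hW
  have hmem : ∀ u ∈ X, L u ∈ W := by
    intro u hu
    have := allWords_sound [dayList E 0, dayList E 1, dayList E 2, dayList E 3]
      [dayList E 4, dayList E 5, dayList E 6] [B 0 (u 0), B 1 (u 1), B 2 (u 2), B 3 (u 3)]
      [B 4 (u 4), B 5 (u 5), B 6 (u 6)]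
      (by simp only [List.forall₂_cons, hB, true_and]; exact List.Forall₂.nil)
      (by simp only [List.forall₂_cons, hB, true_and]; exact List.Forall₂.nil) ?_
    · exact this
    · intro q
      have hc : cnt q ([B 0 (u 0), B 1 (u 1), B 2 (u 2), B 3 (u 3)] ++
          [B 4 (u 4), B 5 (u 5), B 6 (u 6)]) =
          (Finset.univ.filter fun d => (B d (u d)).testBit (q + 1) = true).card := by
        have := countP_lst (fun d => B d (u d)) (fun b => (b / 2).testBit q)
        simp only [Nat.testBit_div_two] at this
        rw [← this]
        simp only [cnt, Nat.testBit_div_two]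
        rfl
      rw [hc]
      by_cases h7 : q + 1 < 7
      · have := hF u hu ⟨q + 1, h7⟩ (by intro h; simp [Fin.ext_iff] at h)
        have e : ∀ d, ((B d (u d)).testBit (q + 1) = true) ↔ xF ⟨q + 1, h7⟩ d = u d := by
          intro d
          have := (hR d (u d)).1 ⟨q + 1, h7⟩
          simp only at this
          rw [this]; simp
        simp only [e]
        exact this
      · by_cases h15 : q + 1 < 15
        · have := hZ u hu ⟨q + 1 - 7, by omega⟩
          have e : ∀ d, ((B d (u d)).testBit (q + 1) = true) ↔
              xZ ⟨q + 1 - 7, by omega⟩ d = u d := by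
            intro d
            have := (hR d (u d)).2.1 ⟨q + 1 - 7, by omega⟩
            simp only at this
            rw [show 7 + (q + 1 - 7) = q + 1 by omega] at this
            rw [this]; simp
          simp only [e]
          exact this
        · left
          rw [Finset.card_eq_zero, Finset.filter_eq_empty_iff]
          intro d _
          rw [Nat.testBit_lt_two_pow (lt_of_lt_of_le (hR d (u d)).2.2
            (Nat.pow_le_pow_right (by norm_num) (by omega)))]
          simp
  rw [good, ite'_eq] at hg
  have hg1 : W.length ≤ 8 := by
    by_contra h
    have : Nat.ble W.length 8 = false := by
      rw [← Bool.not_eq_true, Nat.ble_eq]; exact h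
    rw [this] at hg
    simp at hg
  have hb : Nat.ble W.length 8 = true := by rw [Nat.ble_eq]; exact hg1
  rw [hb, if_pos rfl, Nat.ble_eq] at hg
  have hgen : ∀ V : List (List ℕ), (∀ u ∈ X, L u ∈ V) → X.card ≤ V.length := by
    intro V hV
    rw [← Finset.card_image_of_injective X hinj]
    refine le_trans (Finset.card_le_card (t := V.toFinset) ?_) (List.toFinset_card_le _)
    intro l hl
    obtain ⟨u, hu, rfl⟩ := Finset.mem_image.1 hl
    exact List.mem_toFinset.2 (hV u hu)
  refine ⟨(hgen W hmem).trans hg1, fun h1 => (hgen _ ?_).trans hg⟩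
  intro u hu
  refine List.mem_filter.2 ⟨hmem u hu, ?_⟩
  rw [Nat.beq_eq]
  have h2 := h1 u hu
  have e : ∀ d, (if xF 0 d = u d then 1 else 0) = Nat.mod (B d (u d)) 2 := by
    intro d
    have := (hR d (u d)).1 0
    simp only [Fin.val_zero, Nat.testBit_zero] at this
    show _ = B d (u d) % 2
    by_cases h : xF 0 d = u d
    · simp [h] at this ⊢; omega
    · simp [h] at this ⊢; omega
  rw [Finset.card_filter, Fin.sum_univ_seven] at h2
  simp only [e] at h2
  simp only [L, lst, List.reverse_cons, List.reverse_nil, List.nil_append, List.cons_append,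
    List.map_cons, List.map_nil, List.sum_cons, List.sum_nil]
  omega

end KTS
end

section
namespace KTS
open Finset
set_option linter.unusedSectionVars false

def E5 : Finset (Finset (Fin 5)) := univ.filter fun S => Even S.card

def phi (S : Finset (Fin 5)) : ℤ := (-1) ^ (S.card / 2)

def chi (y S : Finset (Fin 5)) : ℤ := ∏ γ, if γ ∈ y ∧ γ ∈ S then -1 else 1

theorem gauss : ∀ S ∈ E5, ∑ y ∈ E5, phi y * chi y S = -4 * phi S := by decide +kernel

theorem orth : ∀ S ∈ E5, ∑ y ∈ E5, chi y S = if S = ∅ then 16 else 0 := by decide +kernel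

/-- A resolvable Steiner triple system on 15 points. -/
structure Kts {P : Type*} [Fintype P] [DecidableEq P] (x : P → Fin 7 → Fin 5) : Prop where
  card : Fintype.card P = 15
  pair : ∀ a b, a ≠ b → (univ.filter fun i => x a i = x b i).card = 1
  three : ∀ i γ, (univ.filter fun a => x a i = γ).card = 3

variable {P : Type*} [Fintype P] [DecidableEq P] {x : P → Fin 7 → Fin 5}

def oddS (x : P → Fin 7 → Fin 5) (A : Finset P) (i : Fin 7) : Finset (Fin 5) :=
  univ.filter fun γ => Odd (A.filter fun a => x a i = γ).card

def psi (x : P → Fin 7 → Fin 5) (y : Fin 7 → Finset (Fin 5)) (a : P) : ℤ :=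
  ∏ i, if x a i ∈ y i then -1 else 1

theorem prod_psi (y : Fin 7 → Finset (Fin 5)) (A : Finset P) :
    ∏ a ∈ A, psi x y a = ∏ i, chi (y i) (oddS x A i) := by
  unfold psi
  rw [prod_comm]
  refine prod_congr rfl fun i _ => ?_
  rw [← prod_fiberwise A (fun a => x a i)]
  unfold chi
  refine prod_congr rfl fun γ _ => ?_
  rw [prod_congr rfl (g := fun _ => (if γ ∈ y i then (-1 : ℤ) else 1))
    (fun a ha => by rw [(mem_filter.1 ha).2]), prod_const]
  have hm : γ ∈ oddS x A i ↔ Odd (A.filter fun a => x a i = γ).card := by simp [oddS]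
  by_cases h1 : γ ∈ y i
  · by_cases h2 : Odd (A.filter fun a => x a i = γ).card
    · rw [if_pos h1, if_pos ⟨h1, hm.2 h2⟩, h2.neg_one_pow]
    · rw [if_pos h1, if_neg (fun h => h2 (hm.1 h.2)), (Nat.not_odd_iff_even.1 h2).neg_one_pow]
  · rw [if_neg h1, if_neg (fun h => h1 h.1), one_pow]

theorem sq_mod (n : ℕ) : n ^ 2 % 4 = if Odd n then 1 else 0 := by
  rcases Nat.even_or_odd n with h | h
  · rw [if_neg (Nat.not_odd_iff_even.2 h)]
    obtain ⟨k, rfl⟩ := h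
    ring_nf; omega
  · rw [if_pos h]
    obtain ⟨k, rfl⟩ := h
    ring_nf; omega

theorem sum_sq (i : Fin 7) (A : Finset P) : ∑ γ, (A.filter fun a => x a i = γ).card ^ 2 =
    ∑ a ∈ A, ∑ b ∈ A, if x a i = x b i then 1 else 0 := by
  have h1 : ∀ γ, (A.filter fun a => x a i = γ).card ^ 2 =
      ∑ a ∈ A, ∑ b ∈ A, if x a i = γ ∧ x b i = γ then 1 else 0 := by
    intro γ
    rw [sq, card_filter, sum_mul_sum]
    refine sum_congr rfl fun a _ => sum_congr rfl fun b _ => ?_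
    by_cases h1 : x a i = γ <;> by_cases h2 : x b i = γ <;> simp [h1, h2]
  simp only [h1]
  rw [sum_comm]
  refine sum_congr rfl fun a _ => ?_
  rw [sum_comm]
  refine sum_congr rfl fun b _ => ?_
  rw [Finset.sum_eq_single (x a i)]
  · by_cases h : x a i = x b i
    · rw [if_pos h, if_pos ⟨rfl, h.symm⟩]
    · rw [if_neg h, if_neg fun h' => h h'.2.symm]
  · intro b' _ hb
    rw [if_neg fun h' => hb h'.1.symm]
  · simp

theorem Kts.sum_sq (K : Kts x) (A : Finset P) :
    ∑ i, ∑ γ, (A.filter fun a => x a i = γ).card ^ 2 = A.card ^ 2 + 6 * A.card := by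
  simp only [KTS.sum_sq]
  rw [sum_comm]
  have : ∀ a ∈ A, ∑ i, ∑ b ∈ A, (if x a i = x b i then 1 else 0) = A.card + 6 := by
    intro a ha
    rw [sum_comm]
    simp only [← card_filter]
    rw [← add_sum_erase A _ ha]
    rw [sum_congr rfl (fun b hb => K.pair a b (mem_erase.1 hb).1.symm)]
    have : 0 < A.card := card_pos.2 ⟨a, ha⟩
    simp [card_erase_of_mem ha]
    omega
  rw [sum_congr rfl this]
  simp
  ring

theorem oddS_mem (A : Finset P) (hA : Even A.card) (i : Fin 7) : oddS x A i ∈ E5 := by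
  simp only [E5, mem_filter, mem_univ, true_and, oddS]
  have h : ∑ γ, (A.filter fun a => x a i = γ).card = A.card := by
    rw [← card_eq_sum_card_fiberwise (f := fun a => x a i) (t := univ) (by simp)]
  rw [← h] at hA
  rw [Finset.even_sum_iff_even_card_odd] at hA
  exact hA

theorem Kts.phi_one (K : Kts x) (A : Finset P) (hA : Even A.card) :
    ∏ i, phi (oddS x A i) = 1 := by
  unfold phi
  rw [prod_pow_eq_pow_sum]
  apply Even.neg_one_pow
  have h1 : ∀ i, ∃ k, (oddS x A i).card = k + k := by
    intro i
    have := oddS_mem (x := x) A hA i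
    simp only [E5, mem_filter, mem_univ, true_and] at this
    exact this
  choose k hk using h1
  have h2 : ∀ i, (oddS x A i).card / 2 = k i := by intro i; rw [hk]; omega
  simp only [h2]
  have h3 : ∀ i, (∑ γ, (A.filter fun a => x a i = γ).card ^ 2) % 4 = (k i + k i) % 4 := by
    intro i
    rw [← hk, sum_nat_mod]
    simp only [sq_mod]
    rw [← card_filter]
    rfl
  have h4 := K.sum_sq A
  have h5 : (∑ i, ∑ γ, (A.filter fun a => x a i = γ).card ^ 2) % 4 = (∑ i, (k i + k i)) % 4 := by
    rw [sum_nat_mod, sum_congr rfl (fun i _ => h3 i), ← sum_nat_mod]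
  rw [h4, sum_add_distrib] at h5
  obtain ⟨m, hm⟩ := hA
  rw [hm] at h5
  rw [Nat.even_iff]
  have : (m + m) ^ 2 + 6 * (m + m) = 4 * (m ^ 2 + 3 * m) := by ring
  omega

theorem two_prods (y : Fin 7 → Finset (Fin 5)) :
    ∏ a, (1 + psi x y a) + ∏ a, (1 - psi x y a) =
    ∑ A : Finset P, (1 + (-1) ^ A.card) * ∏ a ∈ A, psi x y a := by
  have h2 : ∏ a, (1 - psi x y a) = ∏ a, (1 + (- psi x y a)) := by simp [sub_eq_add_neg]
  rw [h2, prod_one_add, prod_one_add, ← sum_add_distrib, powerset_univ]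
  refine sum_congr rfl fun A _ => ?_
  rw [prod_neg]
  ring

theorem psi_pm (y : Fin 7 → Finset (Fin 5)) (a : P) : psi x y a = 1 ∨ psi x y a = -1 := by
  unfold psi
  refine prod_induction _ (fun z : ℤ => z = 1 ∨ z = -1) ?_ (Or.inl rfl) ?_
  · rintro a b (rfl | rfl) (rfl | rfl) <;> simp
  · intro i _; split_ifs <;> simp

theorem phi_pm (y : Fin 7 → Finset (Fin 5)) : ∏ i, phi (y i) = 1 ∨ ∏ i, phi (y i) = -1 := by
  refine prod_induction _ (fun z : ℤ => z = 1 ∨ z = -1) ?_ (Or.inl rfl) ?_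
  · rintro a b (rfl | rfl) (rfl | rfl) <;> simp
  · intro i _; exact neg_one_pow_eq_or ℤ _

theorem Kts.exists_even (K : Kts x) : ∃ Z : Finset P, Z.Nonempty ∧ Even Z.card ∧
    ∀ i γ, Even (Z.filter fun a => x a i = γ).card := by
  by_contra hno
  push Not at hno
  let Y : Finset (Fin 7 → Finset (Fin 5)) := Fintype.piFinset fun _ => E5
  have c1 : ∀ A : Finset P, Even A.card →
      ∑ y ∈ Y, (∏ i, phi (y i)) * ∏ a ∈ A, psi x y a = (-4) ^ 7 := by
    intro A hA
    simp only [prod_psi, ← prod_mul_distrib]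
    rw [← prod_univ_sum (fun _ => E5) (fun i y => phi y * chi y (oddS x A i))]
    rw [prod_congr rfl (fun i _ => gauss _ (oddS_mem A hA i)), prod_mul_distrib, K.phi_one A hA]
    simp
  have c2 : ∀ A : Finset P, Even A.card →
      ∑ y ∈ Y, ∏ a ∈ A, psi x y a = if A = ∅ then 16 ^ 7 else 0 := by
    intro A hA
    simp only [prod_psi]
    rw [← prod_univ_sum (fun _ => E5) (fun i y => chi y (oddS x A i))]
    rw [prod_congr rfl (fun i _ => orth _ (oddS_mem A hA i))]
    split_ifs with h
    · subst h
      have : ∀ i, oddS x (∅ : Finset P) i = ∅ := by intro i; simp [oddS]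
      simp [this]
    · obtain ⟨i, γ, hi⟩ := hno A (nonempty_iff_ne_empty.2 h) hA
      apply prod_eq_zero (mem_univ i)
      rw [if_neg]
      intro he
      have : γ ∈ oddS x A i := by simp only [oddS, mem_filter, mem_univ, true_and]; simpa using hi
      rw [he] at this
      simp at this
  have hsum : ∑ y ∈ Y, (1 + ∏ i, phi (y i)) *
      (∏ a, (1 + psi x y a) + ∏ a, (1 - psi x y a)) = 0 := by
    have e1 : ∑ A : Finset P, ((1 : ℤ) + (-1) ^ A.card) = 2 ^ 15 := by
      have h := two_prods (x := x) (fun _ => ∅)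
      have hp : ∀ a, psi x (fun _ => ∅) a = 1 := by intro a; simp [psi]
      simp only [hp, prod_const_one, mul_one] at h
      rw [← h]
      simp [K.card]
    have e2 : ∑ y ∈ Y, (∏ a, (1 + psi x y a) + ∏ a, (1 - psi x y a)) = 2 * 16 ^ 7 := by
      simp only [two_prods]
      rw [sum_comm]
      simp only [← mul_sum]
      rw [sum_eq_single ∅]
      · have := c2 ∅ (by rw [card_empty]; exact Even.zero)
        rw [if_pos rfl] at this
        rw [this, card_empty, pow_zero, one_add_one_eq_two]
      · intro A _ hne
        rcases Nat.even_or_odd A.card with h | h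
        · rw [c2 A h, if_neg hne, mul_zero]
        · rw [h.neg_one_pow]; simp
      · exact fun h => absurd (mem_univ _) h
    have e3 : ∑ y ∈ Y, (∏ i, phi (y i)) * (∏ a, (1 + psi x y a) + ∏ a, (1 - psi x y a)) =
        (-4) ^ 7 * 2 ^ 15 := by
      simp only [two_prods, mul_sum]
      rw [sum_comm, ← e1, mul_sum]
      refine sum_congr rfl fun A _ => ?_
      rcases Nat.even_or_odd A.card with h | h
      · rw [← c1 A h, sum_mul]
        refine sum_congr rfl fun y _ => ?_
        ring
      · rw [h.neg_one_pow]; simp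
    simp only [add_mul, one_mul]
    rw [sum_add_distrib, e2, e3]
    norm_num
  rw [sum_eq_zero_iff_of_nonneg] at hsum
  · have h0 := hsum (fun _ => ∅) (by simp [Y, E5])
    have hp : ∀ a, psi x (fun _ => ∅) a = 1 := by intro a; simp [psi]
    simp only [hp] at h0
    simp [phi, K.card] at h0
  · intro y _
    apply mul_nonneg
    · rcases phi_pm y with h | h <;> rw [h] <;> norm_num
    · apply add_nonneg <;> apply prod_nonneg <;> intro a _ <;>
      rcases psi_pm (x := x) y a with h | h <;> rw [h] <;> norm_num

end KTS
end

section
namespace KTS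
open Finset
set_option linter.unusedSectionVars false

variable {P : Type*} [Fintype P] [DecidableEq P] {x : P → Fin 7 → Fin 5}

/-- Three distinct points in a common block. -/
def Tri (x : P → Fin 7 → Fin 5) (a b c : P) : Prop :=
  a ≠ b ∧ a ≠ c ∧ b ≠ c ∧ ∃ d, x a d = x b d ∧ x a d = x c d

theorem Kts.day_uniq (K : Kts x) {a b : P} (h : a ≠ b) {d d' : Fin 7} (h1 : x a d = x b d)
    (h2 : x a d' = x b d') : d = d' := by
  have := K.pair a b h
  obtain ⟨e, he⟩ := card_eq_one.1 this
  have m1 : d ∈ univ.filter fun i => x a i = x b i := by simpa using h1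
  have m2 : d' ∈ univ.filter fun i => x a i = x b i := by simpa using h2
  rw [he, mem_singleton] at m1 m2
  rw [m1, m2]

theorem Kts.day_ex (K : Kts x) {a b : P} (h : a ≠ b) : ∃ d, x a d = x b d := by
  have := K.pair a b h
  obtain ⟨e, he⟩ := card_eq_one.1 this
  have m1 : e ∈ univ.filter fun i => x a i = x b i := by rw [he]; simp
  exact ⟨e, by simpa using m1⟩

theorem Kts.three_le (K : Kts x) (d : Fin 7) (γ : Fin 5) (S : Finset P)
    (h : ∀ a ∈ S, x a d = γ) : S.card ≤ 3 := by
  rw [← K.three d γ]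
  exact card_le_card fun a ha => by simpa using h a ha

theorem Kts.day_third (K : Kts x) {a b : P} (h : a ≠ b) (d : Fin 7) :
    ∃ c, a ≠ c ∧ b ≠ c ∧ x a d = x c d := by
  have h3 := K.three d (x a d)
  have hs : ({a, b} : Finset P).card < (univ.filter fun c => x c d = x a d).card := by
    rw [h3, card_pair h]; norm_num
  obtain ⟨c, hc, hn⟩ := exists_mem_notMem_of_card_lt_card hs
  simp only [mem_filter, mem_univ, true_and, mem_insert, mem_singleton, not_or] at hc hn
  exact ⟨c, Ne.symm hn.1, Ne.symm hn.2, hc.symm⟩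

theorem Kts.tri_ex (K : Kts x) {a b : P} (h : a ≠ b) : ∃ c, Tri x a b c := by
  obtain ⟨d, hd⟩ := K.day_ex h
  obtain ⟨c, h1, h2, h3⟩ := K.day_third h d
  exact ⟨c, h, h1, h2, d, hd, h3⟩

theorem Tri.swap {a b c : P} (h : Tri x a b c) : Tri x b a c := by
  obtain ⟨h1, h2, h3, d, h4, h5⟩ := h
  exact ⟨h1.symm, h3, h2, d, h4.symm, h4.symm.trans h5⟩

theorem Tri.swap' {a b c : P} (h : Tri x a b c) : Tri x a c b := by
  obtain ⟨h1, h2, h3, d, h4, h5⟩ := h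
  exact ⟨h2, h1, h3.symm, d, h5, h4⟩

theorem Kts.tri_uniq (K : Kts x) {a b c c' : P} (h : Tri x a b c) (h' : Tri x a b c') : c = c' := by
  obtain ⟨h1, h2, h3, d, h4, h5⟩ := h
  obtain ⟨h1', h2', h3', d', h4', h5'⟩ := h'
  have := K.day_uniq h1 h4 h4'
  subst this
  by_contra hne
  have := K.three_le d (x a d) {a, b, c, c'} (by
    intro e he
    simp only [mem_insert, mem_singleton] at he
    rcases he with rfl | rfl | rfl | rfl
    · rfl
    · exact h4.symm
    · exact h5.symm
    · exact h5'.symm)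
  rw [card_insert_of_notMem (by simp [h1, h2, h2']), card_insert_of_notMem (by simp [h3, h3']),
    card_insert_of_notMem (by simpa using hne), card_singleton] at this
  omega

/-- abstract Fano plane labelling -/
theorem fano_label (T : P → P → P → Prop) (F : Finset P) (hF : F.card = 7)
    (dist : ∀ a b c, T a b c → a ≠ b ∧ a ≠ c ∧ b ≠ c)
    (sw : ∀ a b c, T a b c → T b a c) (sw' : ∀ a b c, T a b c → T a c b)
    (un : ∀ a b c c', T a b c → T a b c' → c = c')
    (ex : ∀ a ∈ F, ∀ b ∈ F, a ≠ b → ∃ c ∈ F, T a b c) (p : P) (hp : p ∈ F) :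
    ∃ q : Fin 7 → P, q 0 = p ∧ Function.Injective q ∧ (∀ a, a ∈ F ↔ ∃ f, q f = a) ∧
      ∀ d, T (q d) (q (d + 1)) (q (d + 3)) := by
  have big : ∀ S : Finset P, S.card < 7 → ∃ e ∈ F, e ∉ S := fun S hS =>
    exists_mem_notMem_of_card_lt_card (hF ▸ hS)
  obtain ⟨q1, hq1, n1⟩ := big {p} (by simp)
  simp only [mem_singleton] at n1
  obtain ⟨q3, hq3, L0⟩ := ex p hp q1 hq1 (Ne.symm n1)
  obtain ⟨q2, hq2, n2⟩ := big {p, q1, q3} (lt_of_le_of_lt card_le_three (by norm_num))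
  simp only [mem_insert, mem_singleton, not_or] at n2
  obtain ⟨n20, n21, n23⟩ := n2
  obtain ⟨q4, hq4, L1⟩ := ex q1 hq1 q2 hq2 (Ne.symm n21)
  obtain ⟨q5, hq5, L2⟩ := ex q2 hq2 q3 hq3 n23
  obtain ⟨q6, hq6, L6⟩ := ex q2 hq2 p hp n20
  have inter : ∀ a b c b' c', T a b c → T a b' c' → b ≠ b' → b ≠ c' → c ≠ b' ∧ c ≠ c' := by
    intro a b c b' c' h h' h1 h2
    refine ⟨?_, ?_⟩ <;> rintro rfl
    · exact h2 (un _ _ _ _ (sw' _ _ _ h) h')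
    · exact h1 (un _ _ _ _ (sw' _ _ _ h) (sw' _ _ _ h'))
  obtain ⟨d01, d03, d13⟩ := dist _ _ _ L0
  obtain ⟨d12, d14, d24⟩ := dist _ _ _ L1
  obtain ⟨-, d25, d35⟩ := dist _ _ _ L2
  obtain ⟨-, d26, d06⟩ := dist _ _ _ L6
  have d40 : q4 ≠ p ∧ q4 ≠ q3 := inter q1 q2 q4 p q3 L1 (sw _ _ _ L0) n20 n23
  have d50 : q5 ≠ p ∧ q5 ≠ q1 := inter q3 q2 q5 p q1 (sw _ _ _ L2)
    (sw _ _ _ (sw' _ _ _ L0)) n20 n21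
  have d54 : q5 ≠ q1 ∧ q5 ≠ q4 := inter q2 q3 q5 q1 q4 L2 (sw _ _ _ L1) (Ne.symm d13)
    (Ne.symm d40.2)
  have d61 : q6 ≠ q1 ∧ q6 ≠ q3 := inter p q2 q6 q1 q3 (sw _ _ _ L6) L0 n21 n23
  have d64 : q6 ≠ q1 ∧ q6 ≠ q4 := inter q2 p q6 q1 q4 L6 (sw _ _ _ L1) d01 d40.1.symm
  have d65 : q6 ≠ q3 ∧ q6 ≠ q5 := inter q2 p q6 q3 q5 L6 L2 d03 d50.1.symm
  obtain ⟨d40, d43⟩ := d40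
  obtain ⟨d50, d51⟩ := d50
  obtain ⟨-, d54⟩ := d54
  obtain ⟨d61, d63⟩ := d61
  obtain ⟨-, d64⟩ := d64
  obtain ⟨-, d65⟩ := d65
  have hinj : Function.Injective ![p, q1, q2, q3, q4, q5, q6] := by
    intro i j hij
    fin_cases i <;> fin_cases j <;> simp at hij <;> first | rfl | (exfalso; grind)
  have hall : ∀ a, a ∈ F ↔ ∃ f, ![p, q1, q2, q3, q4, q5, q6] f = a := by
    have hsub : univ.image ![p, q1, q2, q3, q4, q5, q6] ⊆ F := by
      intro a ha
      obtain ⟨f, -, rfl⟩ := mem_image.1 ha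
      fin_cases f <;> assumption
    have := eq_of_subset_of_card_le hsub (by rw [hF, card_image_of_injective _ hinj]; simp)
    intro a
    rw [← this]
    simp
  have cases7 : ∀ a ∈ F, a = p ∨ a = q1 ∨ a = q2 ∨ a = q3 ∨ a = q4 ∨ a = q5 ∨ a = q6 := by
    intro a ha
    obtain ⟨f, rfl⟩ := (hall a).1 ha
    fin_cases f <;> simp
  -- the remaining three lines
  have rest : ∀ a ∈ F, ∀ b ∈ F, a ≠ b → ∀ c1 c2 c3 c4 z, T a c1 c2 → T a c3 c4 →
      b ≠ c1 → b ≠ c2 → b ≠ c3 → b ≠ c4 →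
      (∀ e ∈ F, e = a ∨ e = b ∨ e = c1 ∨ e = c2 ∨ e = c3 ∨ e = c4 ∨ e = z) → T a b z := by
    intro a ha b hb hab c1 c2 c3 c4 z h1 h2 e1 e2 e3 e4 hz
    obtain ⟨c, hc, hT⟩ := ex a ha b hb hab
    obtain ⟨t1, t2, t3⟩ := dist _ _ _ hT
    rcases hz c hc with rfl | rfl | rfl | rfl | rfl | rfl | rfl
    · exact absurd rfl t2
    · exact absurd rfl t3
    · exact absurd (un _ _ _ _ (sw' _ _ _ hT) h1) e2
    · exact absurd (un _ _ _ _ (sw' _ _ _ hT) (sw' _ _ _ h1)) e1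
    · exact absurd (un _ _ _ _ (sw' _ _ _ hT) h2) e4
    · exact absurd (un _ _ _ _ (sw' _ _ _ hT) (sw' _ _ _ h2)) e3
    · exact hT
  have L3 : T q3 q4 q6 := rest q3 hq3 q4 hq4 d43.symm p q1 q2 q5 q6
    (sw _ _ _ (sw' _ _ _ L0)) (sw _ _ _ L2) d40 d14.symm d24.symm d54.symm
    (by intro e he; have := cases7 e he; tauto)
  have L4 : T q4 q5 p := rest q4 hq4 q5 hq5 d54.symm q1 q2 q3 q6 p
    (sw _ _ _ (sw' _ _ _ L1)) (sw _ _ _ L3) d51 d25.symm d35.symm d65.symm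
    (by intro e he; have := cases7 e he; tauto)
  have L5 : T q5 q6 q1 := rest q5 hq5 q6 hq6 d65.symm q2 q3 q4 p q1
    (sw _ _ _ (sw' _ _ _ L2)) (sw _ _ _ L4) d26.symm d63 d64 d06.symm
    (by intro e he; have := cases7 e he; tauto)
  refine ⟨![p, q1, q2, q3, q4, q5, q6], rfl, hinj, hall, ?_⟩
  intro d
  fin_cases d
  · exact L0
  · exact L1
  · exact L2
  · exact L3
  · exact L4
  · exact L5
  · exact sw _ _ _ (sw' _ _ _ (sw _ _ _ L6))

def oth : Fin 6 → Fin 6 := ![1, 0, 3, 2, 5, 4]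

def Matched (s : Fin 6 → Fin 6) : Prop :=
    ∃ i3 ∈ ({0, 1} : Finset (Fin 6)), ∃ i5 ∈ ({2, 3} : Finset (Fin 6)),
    ∃ i7 ∈ ({4, 5} : Finset (Fin 6)), s i3 = oth i5 ∧ s i5 = oth i7 ∧ s i7 = oth i3

instance : DecidablePred Matched := fun s => by unfold Matched; infer_instance

def Invol (s : Fin 6 → Fin 6) : Prop := ∀ i, s (s i) = i

instance : DecidablePred Invol := fun s => by unfold Invol; infer_instance

theorem match_label' : ∀ s0 : Fin 6, (s0 ≠ 0 ∧ s0 ≠ 1) → ∀ s1 : Fin 6, (s1 ≠ 0 ∧ s1 ≠ 1) →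
    ∀ s2 : Fin 6, (s2 ≠ 2 ∧ s2 ≠ 3) → ∀ s3 : Fin 6, (s3 ≠ 2 ∧ s3 ≠ 3) →
    ∀ s4 : Fin 6, (s4 ≠ 4 ∧ s4 ≠ 5) → ∀ s5 : Fin 6, (s5 ≠ 4 ∧ s5 ≠ 5) →
    Invol ![s0, s1, s2, s3, s4, s5] → Matched ![s0, s1, s2, s3, s4, s5] := by
  decide +kernel

theorem match_label (s : Fin 6 → Fin 6) (h : ∀ i, s i ≠ i ∧ s i ≠ oth i) (hi : Invol s) :
    Matched s := by
  have e : s = ![s 0, s 1, s 2, s 3, s 4, s 5] := by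
    funext i; fin_cases i <;> rfl
  have := match_label' (s 0) (h 0) (s 1) (h 1).symm (s 2) (h 2) (s 3) (h 3).symm (s 4) (h 4)
    (s 5) (h 5).symm
  rw [← e] at this
  exact this hi

end KTS
end

section
namespace KTS
open Finset
set_option linter.unusedSectionVars false

variable {P : Type*} [Fintype P] [DecidableEq P] {x : P → Fin 7 → Fin 5}

/-- A nonempty set meeting all blocks evenly. -/
structure EvenSet (x : P → Fin 7 → Fin 5) (Z : Finset P) : Prop where
  ne : Z.Nonempty
  even : ∀ i γ, Even (Z.filter fun a => x a i = γ).card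

theorem EvenSet.count (K : Kts x) {Z : Finset P} (H : EvenSet x Z) (i : Fin 7) (γ : Fin 5) :
    (Z.filter fun a => x a i = γ).card = 0 ∨ (Z.filter fun a => x a i = γ).card = 2 := by
  have h1 := H.even i γ
  have h2 := K.three_le i γ (Z.filter fun a => x a i = γ) (fun a ha => (mem_filter.1 ha).2)
  rw [Nat.even_iff] at h1
  omega

theorem EvenSet.count_mem (K : Kts x) {Z : Finset P} (H : EvenSet x Z) (i : Fin 7) {a : P}
    (ha : a ∈ Z) : (Z.filter fun b => x b i = x a i).card = 2 := by
  have : 0 < (Z.filter fun b => x b i = x a i).card := card_pos.2 ⟨a, by simpa using ha⟩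
  have := H.count K i (x a i)
  omega

theorem EvenSet.card (K : Kts x) {Z : Finset P} (H : EvenSet x Z) : Z.card = 8 := by
  obtain ⟨a, ha⟩ := H.ne
  have h1 : ∑ i : Fin 7, (Z.filter fun b => x b i = x a i).card = 14 := by
    rw [sum_congr rfl (fun i _ => H.count_mem K i ha)]
    simp
  simp only [card_filter] at h1
  rw [sum_comm] at h1
  simp only [← card_filter] at h1
  rw [← add_sum_erase Z _ ha, sum_congr rfl (fun b hb => K.pair b a (mem_erase.1 hb).1)] at h1
  simp [card_erase_of_mem ha] at h1
  omega

theorem EvenSet.day (K : Kts x) {Z : Finset P} (H : EvenSet x Z) (i : Fin 7) {γ γ' : Fin 5}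
    (h : (Z.filter fun a => x a i = γ).card = 0) (h' : (Z.filter fun a => x a i = γ').card = 0) :
    γ = γ' := by
  by_contra hne
  have h1 : ∑ γ, (Z.filter fun a => x a i = γ).card = 8 := by
    rw [← H.card K, ← card_eq_sum_card_fiberwise (f := fun a => x a i) (t := univ) (by simp)]
  have hm : γ' ∈ univ.erase γ := mem_erase.2 ⟨Ne.symm hne, mem_univ _⟩
  rw [← add_sum_erase univ _ (mem_univ γ), ← add_sum_erase _ _ hm, h, h'] at h1
  have h2 : ∑ g ∈ (univ.erase γ).erase γ', (Z.filter fun a => x a i = g).card ≤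
      ∑ g ∈ (univ.erase γ).erase γ', 2 := by
    refine sum_le_sum fun g _ => ?_
    have := H.count K i g
    omega
  rw [sum_const, card_erase_of_mem hm, card_erase_of_mem (mem_univ _)] at h2
  simp at h2
  omega

theorem EvenSet.ff (K : Kts x) {Z : Finset P} (H : EvenSet x Z) {d : Fin 7} {a b : P} (hab : a ≠ b)
    (ha : a ∉ Z) (hb : b ∉ Z) (h : x a d = x b d) :
    (Z.filter fun c => x c d = x a d).card = 0 := by
  have h1 := K.three_le d (x a d) (insert a (insert b (Z.filter fun c => x c d = x a d))) (by
    intro c hc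
    simp only [mem_insert, mem_filter] at hc
    rcases hc with rfl | rfl | hc
    · rfl
    · exact h.symm
    · exact hc.2)
  rw [card_insert_of_notMem (by simp [hab, ha]), card_insert_of_notMem (by simp [hb])] at h1
  have := H.count K d (x a d)
  omega

theorem EvenSet.ff' (K : Kts x) {Z : Finset P} (H : EvenSet x Z) {d : Fin 7} {a b c : P}
    (hab : a ≠ b) (ha : a ∉ Z) (hb : b ∉ Z) (h : x a d = x b d) (h' : x a d = x c d) : c ∉ Z := by
  intro hc
  have := H.ff K hab ha hb h
  rw [card_eq_zero, filter_eq_empty_iff] at this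
  exact this hc h'.symm

def b8 : Fin 8 → Fin 7 := ![2, 2, 4, 4, 5, 5, 6, 6]

def em (i : Fin 6) : Fin 8 := ⟨i + 2, by omega⟩

theorem em_cases : ∀ k : Fin 8, k = 0 ∨ k = 1 ∨ ∃ j, k = em j := by decide

theorem em_ne : ∀ i : Fin 6, em i ≠ 1 ∧ em i ≠ 0 := by decide

def prm (i3 i5 i7 : Fin 6) : Fin 8 → Fin 8 :=
  ![0, 1, em (oth i3), em i3, em (oth i5), em i5, em (oth i7), em i7]

theorem prm_inj : ∀ i3 ∈ ({0, 1} : Finset (Fin 6)), ∀ i5 ∈ ({2, 3} : Finset (Fin 6)),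
    ∀ i7 ∈ ({4, 5} : Finset (Fin 6)), Function.Injective (prm i3 i5 i7) := by decide +kernel

theorem prm_b8 : ∀ i3 ∈ ({0, 1} : Finset (Fin 6)), ∀ i5 ∈ ({2, 3} : Finset (Fin 6)),
    ∀ i7 ∈ ({4, 5} : Finset (Fin 6)), ∀ k, b8 (prm i3 i5 i7 k) = b8 k := by decide +kernel

theorem line_union : ∀ d d' : Fin 7, d ≠ d' →
    4 ≤ ({d, d + 1, d + 3, d', d' + 1, d' + 3} : Finset (Fin 7)).card := by decide +kernel

theorem EvenSet.normal (K : Kts x) {Z : Finset P} (H : EvenSet x Z) (p : P) (hp : p ∉ Z) :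
    ∃ (q : Fin 7 → P) (r : Fin 8 → P) (δ : Fin 7 → Fin 7), q 0 = p ∧ Function.Injective q ∧
      Function.Injective δ ∧ Normal (fun f d => x (q f) (δ d)) (fun z d => x (r z) (δ d)) := by
  obtain ⟨q, hq0, hqi, hqF, hL⟩ := fano_label (Tri x) Zᶜ
    (by rw [card_compl, H.card K, K.card]) (fun a b c h => ⟨h.1, h.2.1, h.2.2.1⟩)
    (fun a b c h => h.swap) (fun a b c h => h.swap') (fun a b c c' h h' => K.tri_uniq h h')
    (fun a ha b hb hab => by
      obtain ⟨c, hc⟩ := K.tri_ex hab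
      refine ⟨c, ?_, hc⟩
      rw [mem_compl] at *
      obtain ⟨d, h1, h2⟩ := hc.2.2.2
      exact H.ff' K hab ha hb h1 h2) p (mem_compl.2 hp)
  have hqZ : ∀ f, q f ∉ Z := fun f => mem_compl.1 ((hqF _).2 ⟨f, rfl⟩)
  choose δ hδ using fun d => (hL d).2.2.2
  have hline : ∀ d f, (f = d ∨ f = d + 1 ∨ f = d + 3) → x (q f) (δ d) = x (q d) (δ d) := by
    rintro d f (rfl | rfl | rfl)
    · rfl
    · exact (hδ d).1.symm
    · exact (hδ d).2.symm
  have hzero : ∀ d, (Z.filter fun c => x c (δ d) = x (q d) (δ d)).card = 0 := fun d =>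
    H.ff K (hL d).1 (hqZ _) (hqZ _) (hδ d).1
  have hδi : Function.Injective δ := by
    intro d d' hdd
    by_contra hne
    have hx : x (q d) (δ d) = x (q d') (δ d) := by
      apply H.day K (δ d) (hzero d)
      have := hzero d'
      rwa [← hdd] at this
    have h4 := line_union d d' hne
    rw [← card_image_of_injective _ hqi] at h4
    have := K.three_le (δ d) (x (q d) (δ d)) (image q {d, d + 1, d + 3, d', d' + 1, d' + 3}) (by
      intro a ha
      obtain ⟨f, hf, rfl⟩ := mem_image.1 ha
      simp only [mem_insert, mem_singleton] at hf
      rcases hf with h | h | h | h | h | h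
      · exact hline d f (Or.inl h)
      · exact hline d f (Or.inr (Or.inl h))
      · exact hline d f (Or.inr (Or.inr h))
      · rw [hx, hdd]; exact hline d' f (Or.inl h)
      · rw [hx, hdd]; exact hline d' f (Or.inr (Or.inl h))
      · rw [hx, hdd]; exact hline d' f (Or.inr (Or.inr h)))
    omega
  -- blocks on the first day
  have hoff : ∀ f, Off 0 f → x (q f) (δ 0) ≠ x (q 0) (δ 0) := by
    intro f hf he
    have h4 := off_card 0 f hf
    rw [← card_image_of_injective _ hqi] at h4
    have := K.three_le (δ 0) (x (q 0) (δ 0)) (image q {0, 0 + 1, 0 + 3, f}) (by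
      intro a ha
      obtain ⟨g, hg, rfl⟩ := mem_image.1 ha
      simp only [mem_insert, mem_singleton] at hg
      rcases hg with h | h | h | h
      · exact hline 0 g (Or.inl h)
      · exact hline 0 g (Or.inr (Or.inl h))
      · exact hline 0 g (Or.inr (Or.inr h))
      · rw [h]; exact he)
    omega
  have htwo : ∀ f, Off 0 f → (Z.filter fun c => x c (δ 0) = x (q f) (δ 0)).card = 2 := by
    intro f hf
    rcases H.count K (δ 0) (x (q f) (δ 0)) with h | h
    · exact absurd (H.day K _ h (hzero 0)) (hoff f hf)
    · exact h
  have hpair : ∀ f, Off 0 f → ∃ a b, a ≠ b ∧ a ∈ Z ∧ b ∈ Z ∧ x a (δ 0) = x (q f) (δ 0) ∧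
      x b (δ 0) = x (q f) (δ 0) := by
    intro f hf
    obtain ⟨a, b, hab, he⟩ := card_eq_two.1 (htwo f hf)
    have ha : a ∈ Z.filter fun c => x c (δ 0) = x (q f) (δ 0) := by rw [he]; simp
    have hb : b ∈ Z.filter fun c => x c (δ 0) = x (q f) (δ 0) := by rw [he]; simp
    rw [mem_filter] at ha hb
    exact ⟨a, b, hab, ha.1, hb.1, ha.2, hb.2⟩
  have hdiff : ∀ f f', Off 0 f → Off 0 f' → x (q f) (δ 0) = x (q f') (δ 0) → f = f' := by
    intro f f' hf hf' he
    by_contra hne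
    have := H.ff K (hqi.ne hne) (hqZ f) (hqZ f') he
    rw [htwo f hf] at this
    omega
  obtain ⟨c0, c1, c01, c0Z, c1Z, c0x, c1x⟩ := hpair 2 (by decide)
  obtain ⟨c2, c3, c23, c2Z, c3Z, c2x, c3x⟩ := hpair 4 (by decide)
  obtain ⟨c4, c5, c45, c4Z, c5Z, c4x, c5x⟩ := hpair 5 (by decide)
  obtain ⟨c6, c7, c67, c6Z, c7Z, c6x, c7x⟩ := hpair 6 (by decide)
  obtain ⟨r0, hr0⟩ : ∃ r0 : Fin 8 → P, r0 = ![c0, c1, c2, c3, c4, c5, c6, c7] := ⟨_, rfl⟩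
  have hr0Z : ∀ k, r0 k ∈ Z := by
    intro k; rw [hr0]; fin_cases k <;> assumption
  have hr0x : ∀ k, x (r0 k) (δ 0) = x (q (b8 k)) (δ 0) := by
    intro k; rw [hr0]; fin_cases k <;> assumption
  have hb8 : ∀ k, Off 0 (b8 k) := by decide
  have hr0i : Function.Injective r0 := by
    intro k k' h
    have h1 : b8 k = b8 k' := hdiff _ _ (hb8 k) (hb8 k') (by rw [← hr0x, ← hr0x, h])
    have h2 : ∀ k k', b8 k = b8 k' → k = k' ∨ (k = 0 ∧ k' = 1) ∨ (k = 1 ∧ k' = 0) ∨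
      (k = 2 ∧ k' = 3) ∨ (k = 3 ∧ k' = 2) ∨ (k = 4 ∧ k' = 5) ∨ (k = 5 ∧ k' = 4) ∨
      (k = 6 ∧ k' = 7) ∨ (k = 7 ∧ k' = 6) := by decide +kernel
    rcases h2 k k' h1 with h2 | ⟨rfl, rfl⟩ | ⟨rfl, rfl⟩ | ⟨rfl, rfl⟩ | ⟨rfl, rfl⟩ | ⟨rfl, rfl⟩ |
      ⟨rfl, rfl⟩ | ⟨rfl, rfl⟩ | ⟨rfl, rfl⟩
    · exact h2
    all_goals rw [hr0] at h
    · exact absurd h c01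
    · exact absurd h.symm c01
    · exact absurd h c23
    · exact absurd h.symm c23
    · exact absurd h c45
    · exact absurd h.symm c45
    · exact absurd h c67
    · exact absurd h.symm c67
  have hsurj : ∀ r : Fin 8 → P, Function.Injective r → (∀ k, r k ∈ Z) → univ.image r = Z := by
    intro r hi hZ
    apply eq_of_subset_of_card_le
    · intro a ha
      obtain ⟨k, -, rfl⟩ := mem_image.1 ha
      exact hZ k
    · rw [H.card K, card_image_of_injective _ hi]; simp
  have hr0s : ∀ a ∈ Z, ∃ k, r0 k = a := by
    intro a ha
    rw [← hsurj r0 hr0i hr0Z] at ha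
    obtain ⟨k, -, hk⟩ := mem_image.1 ha
    exact ⟨k, hk⟩
  have hqr : ∀ f k, q f ≠ r0 k := fun f k h => hqZ f (h ▸ hr0Z k)
  have hmu : ∀ i : Fin 6, ∃ j : Fin 6, Tri x (q 2) (r0 (em i)) (r0 (em j)) := by
    intro i
    obtain ⟨m, hm⟩ := K.tri_ex (hqr 2 (em i))
    have hmZ : m ∈ Z := by
      by_contra hmZ
      obtain ⟨d, h1, h2⟩ := hm.2.2.2
      exact H.ff' K hm.2.1 (hqZ 2) hmZ h2 h1 (hr0Z _)
    obtain ⟨k, rfl⟩ := hr0s m hmZ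
    have T01 : Tri x (q 2) (r0 0) (r0 1) :=
      ⟨hqr _ _, hqr _ _, hr0i.ne (by decide), δ 0, (hr0x 0).symm, (hr0x 1).symm⟩
    have hk : k = 0 ∨ k = 1 ∨ ∃ j, k = em j := em_cases k
    rcases hk with rfl | rfl | ⟨j, rfl⟩
    · have := hr0i (K.tri_uniq hm.swap' T01)
      exact absurd this (em_ne i).1
    · have := hr0i (K.tri_uniq hm.swap' T01.swap')
      exact absurd this (em_ne i).2
    · exact ⟨j, hm⟩
  choose s hs using hmu
  have hemi : Function.Injective em := by decide
  have hinv : Invol s := by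
    intro i
    exact hemi (hr0i (K.tri_uniq (hs (s i)) (hs i).swap'))
  have hb8o : ∀ i, b8 (em (oth i)) = b8 (em i) := by decide
  have hb82 : ∀ i, b8 (em i) ≠ 2 := by decide
  have hoth : ∀ i, oth i ≠ i := by decide
  obtain ⟨i3, h3, i5, h5, i7, h7, e1, e2, e3⟩ := match_label s (by
    intro i
    refine ⟨?_, ?_⟩
    · intro h
      have := (hs i).2.2.1
      rw [h] at this
      exact this rfl
    · intro h
      have h1 := hs i
      rw [h] at h1
      have h2 : Tri x (r0 (em i)) (r0 (em (oth i))) (q (b8 (em i))) :=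
        ⟨hr0i.ne (hemi.ne (hoth i).symm), (hqr _ _).symm, (hqr _ _).symm, δ 0,
          by rw [hr0x, hr0x, hb8o], hr0x _⟩
      have h3 := K.tri_uniq h1.swap.swap' h2
      exact hb82 i (hqi h3).symm) hinv
  refine ⟨q, fun k => r0 (prm i3 i5 i7 k), δ, hq0, hqi, hδi, ?_⟩
  have hri : Function.Injective fun k => r0 (prm i3 i5 i7 k) :=
    hr0i.comp (prm_inj i3 h3 i5 h5 i7 h7)
  have hrx : ∀ k, x (r0 (prm i3 i5 i7 k)) (δ 0) = x (q (b8 k)) (δ 0) := by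
    intro k
    rw [hr0x, prm_b8 i3 h3 i5 h5 i7 h7]
  have hcZ : ∀ d γ, (univ.filter fun z => x (r0 (prm i3 i5 i7 z)) (δ d) = γ).card =
      (Z.filter fun a => x a (δ d) = γ).card := by
    intro d γ
    rw [← hsurj _ hri (fun k => hr0Z _), filter_image, card_image_of_injective _ hri]
  have hcF : ∀ d γ, (univ.filter fun f => x (q f) (δ d) = γ).card =
      (Zᶜ.filter fun a => x a (δ d) = γ).card := by
    intro d γ
    have : Zᶜ = univ.image q := by
      ext a; rw [hqF]; simp
    rw [this, filter_image, card_image_of_injective _ hqi]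
  have hmm : ∀ i j, s i = j → ∃ d, x (r0 (em i)) (δ d) = x (q 2) (δ d) ∧
      x (r0 (em j)) (δ d) = x (q 2) (δ d) := by
    rintro i j rfl
    obtain ⟨d, h1, h2⟩ := (hs i).2.2.2
    obtain ⟨d', rfl⟩ := (Finite.injective_iff_surjective.1 hδi) d
    exact ⟨d', h1.symm, h2.symm⟩
  exact {
    FF := fun f f' d d' hne h h' => hδi (K.day_uniq (hqi.ne hne) h h')
    FZ := fun f z d d' h h' => hδi (K.day_uniq (hqr _ _) h h')
    ZZ := fun z z' d d' hne h h' => hδi (K.day_uniq (hri.ne hne) h h')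
    three := by
      intro d γ
      rw [hcZ, hcF, ← K.three (δ d) γ, ← card_union_of_disjoint, ← filter_union, union_comm, union_compl]
      · exact disjoint_filter_filter (disjoint_compl_left)
    even := by
      intro d γ
      rw [hcZ]
      exact H.count K _ _
    l1 := fun d => hline d _ (Or.inr (Or.inl rfl))
    l3 := fun d => hline d _ (Or.inr (Or.inr rfl))
    z0 := hrx 0
    z1 := hrx 1
    z2 := hrx 2
    z3 := hrx 3
    z4 := hrx 4
    z5 := hrx 5
    z6 := hrx 6
    z7 := hrx 7
    m34 := hmm _ _ e1
    m56 := hmm _ _ e2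
    m72 := hmm _ _ e3 }

/-- number of days on which `a` agrees with `u` -/
def dg (x : P → Fin 7 → Fin 5) (a : P) (u : Fin 7 → Fin 5) : ℕ :=
  (univ.filter fun i => x a i = u i).card

theorem Kts.sum_dg (K : Kts x) (u : Fin 7 → Fin 5) : ∑ a, dg x a u = 21 := by
  unfold dg
  simp only [card_filter]
  rw [sum_comm]
  simp only [← card_filter]
  rw [sum_congr rfl (fun i _ => K.three i (u i))]
  simp

theorem Kts.main (K : Kts x) : ∃ F : Finset P, F.card = 7 ∧
    (∀ u, Odd (F.filter fun a => Odd (dg x a u)).card) ∧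
    ∀ p ∈ F, ∀ X : Finset (Fin 7 → Fin 5),
      (∀ u ∈ X, ∀ a, a ≠ p → dg x a u = 0 ∨ dg x a u = 2) →
      X.card ≤ 8 ∧ ((∀ u ∈ X, dg x p u = 1) → X.card ≤ 3) := by
  obtain ⟨Z, hne, -, hev⟩ := K.exists_even
  have H : EvenSet x Z := ⟨hne, hev⟩
  refine ⟨Zᶜ, by rw [card_compl, H.card K, K.card], ?_, ?_⟩
  · intro u
    have h1 := K.sum_dg u
    rw [← sum_add_sum_compl Z] at h1
    have h2 : Even (∑ a ∈ Z, dg x a u) := by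
      unfold dg
      simp only [card_filter]
      rw [sum_comm]
      simp only [← card_filter]
      exact even_sum _ (fun i _ => hev i (u i))
    rw [← odd_sum_iff_odd_card_odd]
    rw [Nat.even_iff] at h2
    rw [Nat.odd_iff]
    omega
  · intro p hp X hX
    obtain ⟨q, r, δ, hq0, hqi, hδi, N⟩ := H.normal K p (mem_compl.1 hp)
    let e : Fin 7 ≃ Fin 7 := Equiv.ofBijective δ ⟨hδi, Finite.injective_iff_surjective.1 hδi⟩
    have hdeg : ∀ a u, (univ.filter fun d => x a (δ d) = u (δ d)).card = dg x a u := by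
      intro a u
      unfold dg
      rw [card_filter, card_filter]
      exact Equiv.sum_comp e (fun i => if x a i = u i then 1 else 0)
    have hcomp : Function.Injective fun (u : Fin 7 → Fin 5) => fun d => u (δ d) := by
      intro u v h
      funext i
      obtain ⟨d, rfl⟩ := Finite.injective_iff_surjective.1 hδi i
      exact congrFun h d
    have hrp : ∀ z, r z ≠ p := by
      intro z h
      have h1 : x (q 0) (δ 0) = x (r z) (δ 0) := by rw [hq0, h]
      have h2 : x (q 0) (δ 1) = x (r z) (δ 1) := by rw [hq0, h]
      exact absurd (N.FZ 0 z 0 1 h1 h2) (by decide)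
    have hqp : ∀ f, f ≠ 0 → q f ≠ p := by
      intro f hf h
      rw [← hq0] at h
      exact hf (hqi h)
    have := normal_bound N (X.image fun u d => u (δ d)) (by
      intro v hv f hf
      obtain ⟨u, hu, rfl⟩ := mem_image.1 hv
      rw [hdeg]
      exact hX u hu _ (hqp f hf)) (by
      intro v hv z
      obtain ⟨u, hu, rfl⟩ := mem_image.1 hv
      rw [hdeg]
      exact hX u hu _ (hrp z))
    rw [card_image_of_injective _ hcomp] at this
    refine ⟨this.1, fun h1 => this.2 ?_⟩
    intro v hv
    obtain ⟨u, hu, rfl⟩ := mem_image.1 hv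
    rw [hdeg, hq0]
    exact h1 u hu

end KTS
end

section
namespace KTS
open Finset
set_option linter.unusedSectionVars false

abbrev W := Fin 8 → Fin 5

/-- number of agreements -/
def ag (u v : W) : ℕ := (univ.filter fun i => u i = v i).card

theorem ag_self (u : W) : ag u u = 8 := by simp [ag]

theorem ag_comm (u v : W) : ag u v = ag v u := by
  unfold ag; simp only [eq_comm]

structure Code (C : Finset W) : Prop where
  card : C.card = 65
  dist : ∀ u ∈ C, ∀ v ∈ C, u ≠ v → ag u v ≤ 2

theorem ag_dist (u v : W) : ag u v + hammingDist u v = 8 := by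
  unfold ag hammingDist
  have := card_filter_add_card_filter_not (s := (univ : Finset (Fin 8))) (fun i => u i = v i)
  simpa using this

def B (C : Finset W) (j : Fin 8) (γ : Fin 5) : Finset W := C.filter fun w => w j = γ

def fr (D : Finset W) (i : Fin 8) (γ : Fin 5) : ℕ := (D.filter fun w => w i = γ).card

def sqs (D : Finset W) (i : Fin 8) : ℕ := ∑ γ, fr D i γ ^ 2

def pr (D : Finset W) : ℕ := ∑ u ∈ D, (D.filter fun v => ag u v = 1).card

theorem fr_sum (D : Finset W) (i : Fin 8) : ∑ γ, fr D i γ = D.card := by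
  unfold fr
  rw [← card_eq_sum_card_fiberwise (f := fun a : W => a i) (t := univ) (by simp)]

theorem sqs_eq (D : Finset W) (i : Fin 8) : sqs D i =
    ∑ u ∈ D, ∑ v ∈ D, if u i = v i then 1 else 0 := by
  unfold sqs fr
  have h1 : ∀ γ, (D.filter fun a => a i = γ).card ^ 2 =
      ∑ a ∈ D, ∑ b ∈ D, if a i = γ ∧ b i = γ then 1 else 0 := by
    intro γ
    rw [sq, card_filter, sum_mul_sum]
    refine sum_congr rfl fun a _ => sum_congr rfl fun b _ => ?_
    by_cases h1 : a i = γ <;> by_cases h2 : b i = γ <;> simp [h1, h2]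
  simp only [h1]
  rw [sum_comm]
  refine sum_congr rfl fun a _ => ?_
  rw [sum_comm]
  refine sum_congr rfl fun b _ => ?_
  rw [Finset.sum_eq_single (a i)]
  · by_cases h : a i = b i
    · rw [if_pos h, if_pos ⟨rfl, h.symm⟩]
    · rw [if_neg h, if_neg fun h' => h h'.2.symm]
  · intro b' _ hb
    rw [if_neg fun h' => hb h'.1.symm]
  · simp

theorem ag_pos {u v : W} {j : Fin 8} (h : u j = v j) : 1 ≤ ag u v :=
  card_pos.2 ⟨j, by simpa using h⟩

variable {C : Finset W}

theorem Code.pr_eq (H : Code C) (j : Fin 8) (γ : Fin 5) :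
    pr (B C j γ) + ∑ i : Fin 7, sqs (B C j γ) (j.succAbove i) =
      (B C j γ).card ^ 2 + 6 * (B C j γ).card := by
  set D := B C j γ with hD
  have hDj : ∀ u ∈ D, u j = γ := fun u hu => (mem_filter.1 hu).2
  have hDC : ∀ u ∈ D, u ∈ C := fun u hu => (mem_filter.1 hu).1
  have h1 : sqs D j = D.card ^ 2 := by
    unfold sqs
    rw [Finset.sum_eq_single γ]
    · unfold fr; rw [filter_true_of_mem hDj]
    · intro b _ hb
      have : fr D j b = 0 := by
        unfold fr
        rw [card_eq_zero, filter_eq_empty_iff]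
        intro u hu h
        exact hb (h.symm.trans (hDj u hu))
      rw [this]; rfl
    · simp
  have h2 : ∑ i : Fin 8, sqs D i = ∑ u ∈ D, ∑ v ∈ D, ag u v := by
    simp only [sqs_eq]
    rw [sum_comm]
    refine sum_congr rfl fun u _ => ?_
    rw [sum_comm]
    refine sum_congr rfl fun v _ => ?_
    rw [ag, card_filter]
  have h3 : (∑ u ∈ D, ∑ v ∈ D, ag u v) + pr D = D.card * (2 * D.card + 6) := by
    unfold pr
    rw [← sum_add_distrib, ← smul_eq_mul, ← sum_const]
    refine sum_congr rfl fun u hu => ?_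
    rw [card_filter, ← sum_add_distrib, ← add_sum_erase D _ hu, ag_self,
      sum_congr rfl (g := fun _ => 2)]
    · have : 0 < D.card := card_pos.2 ⟨u, hu⟩
      simp [card_erase_of_mem hu]
      omega
    · intro v hv
      have hne := (mem_erase.1 hv).1
      have hv' := (mem_erase.1 hv).2
      have a1 := H.dist u (hDC u hu) v (hDC v hv') hne.symm
      have a2 : 1 ≤ ag u v := ag_pos ((hDj u hu).trans (hDj v hv').symm)
      split_ifs <;> omega
  rw [Fin.sum_univ_succAbove _ j, h1] at h2
  rw [← h2] at h3
  nlinarith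

theorem sqs_ge (D : Finset W) (i : Fin 8) (k : ℤ) :
    (2 * k + 1) * D.card - 5 * k * (k + 1) ≤ sqs D i := by
  have h : ∀ γ, (2 * k + 1) * (fr D i γ : ℤ) - k * (k + 1) ≤ (fr D i γ : ℤ) ^ 2 := by
    intro γ
    have : 0 ≤ ((fr D i γ : ℤ) - k) * ((fr D i γ : ℤ) - k - 1) := by
      rcases le_or_gt (fr D i γ : ℤ) k with h | h
      · exact mul_nonneg_of_nonpos_of_nonpos (by omega) (by omega)
      · exact mul_nonneg (by omega) (by omega)
    nlinarith
  have h2 := sum_le_sum fun γ (_ : γ ∈ (univ : Finset (Fin 5))) => h γ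
  rw [sum_sub_distrib, ← mul_sum] at h2
  have h3 := fr_sum D i
  rw [← h3]
  unfold sqs
  push_cast
  simp at h2
  linarith

theorem Code.pr_le (H : Code C) (j : Fin 8) (γ : Fin 5) (k : ℤ) :
    (pr (B C j γ) : ℤ) + 7 * ((2 * k + 1) * (B C j γ).card - 5 * k * (k + 1)) ≤
      (B C j γ).card ^ 2 + 6 * (B C j γ).card := by
  have h := H.pr_eq j γ
  have h2 := sum_le_sum fun i (_ : i ∈ (univ : Finset (Fin 7))) =>
    sqs_ge (B C j γ) (j.succAbove i) k
  simp only [sum_const, card_univ, Fintype.card_fin, nsmul_eq_mul] at h2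
  zify at h
  push_cast at h2
  linarith

theorem Code.le15 (H : Code C) (j : Fin 8) (γ : Fin 5) : (B C j γ).card ≤ 15 := by
  have h := H.pr_eq j γ
  set m := (B C j γ).card
  have h2 : ∀ i, m ^ 2 ≤ 5 * sqs (B C j γ) i := by
    intro i
    have := sq_sum_le_card_mul_sum_sq (s := (univ : Finset (Fin 5))) (f := fr (B C j γ) i)
    rw [fr_sum] at this
    simpa [sqs] using this
  have h3 := sum_le_sum fun i (_ : i ∈ (univ : Finset (Fin 7))) => h2 (j.succAbove i)
  rw [← mul_sum] at h3
  simp only [sum_const, card_univ, Fintype.card_fin, smul_eq_mul] at h3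
  by_contra hc
  push Not at hc
  nlinarith

def hh (m : ℕ) : ℕ := ([0, 0, 2, 6, 12, 20, 16, 14, 14, 16, 20, 12, 6, 2, 0, 0] : List ℕ).getD m 0

theorem Code.pr_hh (H : Code C) (j : Fin 8) (γ : Fin 5) :
    pr (B C j γ) ≤ hh (B C j γ).card := by
  have h0 := H.pr_le j γ 0
  have h1 := H.pr_le j γ 1
  have h2 := H.pr_le j γ 2
  have h := H.le15 j γ
  generalize (B C j γ).card = m at *
  generalize pr (B C j γ) = p at *
  interval_cases m <;> norm_num [hh] at * <;> omega

theorem Code.sizes (H : Code C) (j : Fin 8) : ∑ γ, (B C j γ).card = 65 := by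
  rw [← H.card]; exact fr_sum C j

def n15 (m : Fin 5 → ℕ) : ℕ := (univ.filter fun γ => m γ = 15).card
def n14 (m : Fin 5 → ℕ) : ℕ := (univ.filter fun γ => m γ = 14).card

def colOk (a b c d e : ℕ) : Bool :=
  let s := hh a + hh b + hh c + hh d + hh e
  let p := (if a = 15 then 1 else 0) + (if b = 15 then 1 else 0) + (if c = 15 then 1 else 0) +
    (if d = 15 then 1 else 0) + (if e = 15 then 1 else 0)
  let q := (if a = 14 then 1 else 0) + (if b = 14 then 1 else 0) + (if c = 14 then 1 else 0) +
    (if d = 14 then 1 else 0) + (if e = 14 then 1 else 0)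
  decide (s ≤ 40 ∧ (p ≤ 1 → s ≤ 26) ∧ (p = 0 → s ≤ 22) ∧ (p = 0 → q ≤ 2 → s ≤ 16) ∧
    (p = 0 → q ≤ 1 → s ≤ 12))

theorem col_dec : ∀ a < 11, ∀ b < 11 - a, ∀ c < 11 - a - b, ∀ d < 11 - a - b - c,
    colOk (15 - a) (15 - b) (15 - c) (15 - d) (5 + a + b + c + d) = true := by decide +kernel

theorem col_bound (m : Fin 5 → ℕ) (h15 : ∀ γ, m γ ≤ 15) (hs : ∑ γ, m γ = 65) :
    (∑ γ, hh (m γ) ≤ 40) ∧ (n15 m ≤ 1 → ∑ γ, hh (m γ) ≤ 26) ∧ (n15 m = 0 → ∑ γ, hh (m γ) ≤ 22) ∧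
    (n15 m = 0 → n14 m ≤ 2 → ∑ γ, hh (m γ) ≤ 16) ∧
    (n15 m = 0 → n14 m ≤ 1 → ∑ γ, hh (m γ) ≤ 12) := by
  unfold n15 n14
  simp only [card_filter]
  rw [Fin.sum_univ_five] at hs
  simp only [Fin.sum_univ_five]
  have a0 := h15 0
  have a1 := h15 1
  have a2 := h15 2
  have a3 := h15 3
  have a4 := h15 4
  have := col_dec (15 - m 0) (by omega) (15 - m 1) (by omega) (15 - m 2) (by omega)
    (15 - m 3) (by omega)
  rw [show 15 - (15 - m 0) = m 0 by omega, show 15 - (15 - m 1) = m 1 by omega,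
    show 15 - (15 - m 2) = m 2 by omega, show 15 - (15 - m 3) = m 3 by omega,
    show 5 + (15 - m 0) + (15 - m 1) + (15 - m 2) + (15 - m 3) = m 4 by omega] at this
  exact of_decide_eq_true this

/-- ordered pairs agreeing exactly once, but not in column `j` -/
def M (C : Finset W) (j : Fin 8) : ℕ :=
  ∑ u ∈ C, ∑ v ∈ C, if u j ≠ v j ∧ ag u v = 1 then 1 else 0

theorem pr_sum (C : Finset W) (i : Fin 8) : ∑ γ, pr (B C i γ) =
    ∑ u ∈ C, ∑ v ∈ C, if u i = v i ∧ ag u v = 1 then 1 else 0 := by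
  have h : ∀ γ, pr (B C i γ) = ∑ u ∈ C, ∑ v ∈ C,
      if u i = γ ∧ v i = γ ∧ ag u v = 1 then 1 else 0 := by
    intro γ
    unfold pr B
    rw [sum_filter]
    refine sum_congr rfl fun u _ => ?_
    split_ifs with h
    · rw [card_filter, sum_filter]
      refine sum_congr rfl fun v _ => ?_
      by_cases h1 : v i = γ <;> simp [h, h1]
    · simp [h]
  simp only [h]
  rw [sum_comm]
  refine sum_congr rfl fun u _ => ?_
  rw [sum_comm]
  refine sum_congr rfl fun v _ => ?_
  rw [Finset.sum_eq_single (u i)]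
  · simp [eq_comm]
  · intro b _ hb
    rw [if_neg fun h' => hb h'.1.symm]
  · simp

theorem M_le (C : Finset W) (j : Fin 8) : M C j ≤ ∑ i : Fin 7, ∑ γ, pr (B C (j.succAbove i) γ) := by
  simp only [pr_sum]
  rw [sum_comm]
  unfold M
  refine sum_le_sum fun u _ => ?_
  rw [sum_comm]
  refine sum_le_sum fun v _ => ?_
  split_ifs with h
  · have h1 : 1 ≤ ag u v := h.2.ge
    obtain ⟨i, hi⟩ := card_pos.1 h1
    simp only [mem_filter, mem_univ, true_and] at hi
    obtain ⟨i', rfl⟩ := Fin.exists_succAbove_eq (x := i) (y := j) (by rintro rfl; exact h.1 hi)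
    refine le_trans ?_ (single_le_sum (f := fun i : Fin 7 =>
      if u (j.succAbove i) = v (j.succAbove i) ∧ ag u v = 1 then 1 else 0)
      (fun _ _ => by positivity) (mem_univ i'))
    simp [hi, h.2]
  · positivity

theorem Code.M_le_of (H : Code C) (j : Fin 8) (c : ℕ)
    (h : ∀ i, ∑ γ, hh (B C i γ).card ≤ c) : M C j ≤ 7 * c := by
  have h1 : ∀ i : Fin 7, ∑ γ, pr (B C (j.succAbove i) γ) ≤ c := fun i =>
    (sum_le_sum fun γ _ => H.pr_hh (j.succAbove i) γ).trans (h (j.succAbove i))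
  have h2 := sum_le_sum fun i (_ : i ∈ (univ : Finset (Fin 7))) => h1 i
  rw [sum_const, card_univ, Fintype.card_fin, smul_eq_mul] at h2
  exact (M_le C j).trans h2

def n1 (u : W) (D : Finset W) : ℕ := (D.filter fun v => ag u v = 1).card

theorem six_dec : ∀ a b α0 α1 α2 : Fin 5, α0 ≠ α1 → α0 ≠ α2 → α1 ≠ α2 →
    ((if a ≠ α0 ∧ b = α0 then 1 else 0) + (if (a ≠ α0 ∧ a ≠ α1) ∧ b = α1 then 1 else 0) +
      (if (a ≠ α0 ∧ a ≠ α1 ∧ a ≠ α2) ∧ b = α2 then 1 else 0)) +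
    ((if b ≠ α0 ∧ a = α0 then 1 else 0) + (if (b ≠ α0 ∧ b ≠ α1) ∧ a = α1 then 1 else 0) +
      (if (b ≠ α0 ∧ b ≠ α1 ∧ b ≠ α2) ∧ a = α2 then 1 else 0)) ≤
    (if a ≠ b then 1 else 0) := by decide +kernel

theorem R_eq (C : Finset W) (j : Fin 8) (α : Fin 5) (p : Fin 5 → Prop) [DecidablePred p] :
    ∑ u ∈ C.filter (fun u => p (u j)), n1 u (B C j α) =
    ∑ u ∈ C, ∑ v ∈ C, if ag u v = 1 then (if p (u j) ∧ v j = α then 1 else 0) else 0 := by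
  rw [sum_filter]
  refine sum_congr rfl fun u _ => ?_
  unfold n1 B
  split_ifs with h
  · rw [card_filter, sum_filter]
    refine sum_congr rfl fun v _ => ?_
    by_cases h1 : v j = α <;> simp [h, h1]
  · simp [h]

theorem M_ge (C : Finset W) (j : Fin 8) (α0 α1 α2 : Fin 5) (h01 : α0 ≠ α1) (h02 : α0 ≠ α2)
    (h12 : α1 ≠ α2) :
    2 * (∑ u ∈ C.filter (fun u => u j ≠ α0), n1 u (B C j α0) +
      ∑ u ∈ C.filter (fun u => u j ≠ α0 ∧ u j ≠ α1), n1 u (B C j α1) +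
      ∑ u ∈ C.filter (fun u => u j ≠ α0 ∧ u j ≠ α1 ∧ u j ≠ α2), n1 u (B C j α2)) ≤ M C j := by
  rw [R_eq C j α0 (fun a => a ≠ α0), R_eq C j α1 (fun a => a ≠ α0 ∧ a ≠ α1),
    R_eq C j α2 (fun a => a ≠ α0 ∧ a ≠ α1 ∧ a ≠ α2)]
  simp only [← sum_add_distrib]
  rw [two_mul]
  nth_rewrite 2 [sum_comm]
  simp only [← sum_add_distrib]
  unfold M
  refine sum_le_sum fun u _ => sum_le_sum fun v _ => ?_
  rw [ag_comm v u]
  by_cases h : ag u v = 1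
  · have := six_dec (u j) (v j) α0 α1 α2 h01 h02 h12
    simpa only [h, if_true, and_true] using this
  · simp [h]

end KTS
end

section
namespace KTS
open Finset
set_option linter.unusedSectionVars false

section
variable {P : Type*} [Fintype P] [DecidableEq P] {x : P → Fin 7 → Fin 5}

theorem Kts.n1_odd (K : Kts x) (u : Fin 7 → Fin 5) (h : ∀ a, dg x a u ≤ 2) :
    Odd (univ.filter fun a => dg x a u = 1).card := by
  have h1 := K.sum_dg u
  have h2 : ∑ a, dg x a u = (univ.filter fun a => dg x a u = 1).card +
      2 * (univ.filter fun a => dg x a u = 2).card := by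
    rw [card_filter, card_filter, mul_sum, ← sum_add_distrib]
    refine sum_congr rfl fun a _ => ?_
    have := h a
    split_ifs <;> omega
  rw [Nat.odd_iff]
  omega

theorem Kts.count15 (K : Kts x) (U : Finset (Fin 7 → Fin 5)) (hU : ∀ u ∈ U, ∀ a, dg x a u ≤ 2) :
    3 * U.card ≤ ∑ u ∈ U, (univ.filter fun a => dg x a u = 1).card + 42 := by
  obtain ⟨F, hF7, hFo, hX⟩ := K.main
  let V := U.filter fun u => (univ.filter fun a => dg x a u = 1).card = 1
  have hV : V.card ≤ 21 := by
    let g : P → Finset (Fin 7 → Fin 5) := fun p => V.filter fun u => dg x p u = 1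
    have hsub : V ⊆ F.biUnion g := by
      intro u hu
      have hodd := hFo u
      obtain ⟨p, hp⟩ := card_pos.1 hodd.pos
      obtain ⟨hpF, hpo⟩ := mem_filter.1 hp
      refine mem_biUnion.2 ⟨p, hpF, mem_filter.2 ⟨hu, ?_⟩⟩
      have := hU u (mem_filter.1 hu).1 p
      rw [Nat.odd_iff] at hpo
      omega
    have hg : ∀ p ∈ F, (g p).card ≤ 3 := by
      intro p hp
      refine (hX p hp (g p) ?_).2 fun u hu => (mem_filter.1 hu).2
      intro u hu a ha
      obtain ⟨hu1, hu2⟩ := mem_filter.1 hu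
      obtain ⟨hu3, hu4⟩ := mem_filter.1 hu1
      have h2 := hU u hu3 a
      have h1 : dg x a u ≠ 1 := by
        intro h1
        exact ha (card_le_one.1 hu4.le a (by simpa using h1) p (by simpa using hu2))
      omega
    have := card_biUnion_le_card_mul F g 3 hg
    rw [hF7] at this
    exact (card_le_card hsub).trans this
  have hs : ∀ u ∈ U, 3 ≤ (univ.filter fun a => dg x a u = 1).card +
      2 * (if (univ.filter fun a => dg x a u = 1).card = 1 then 1 else 0) := by
    intro u hu
    have := K.n1_odd u (hU u hu)
    rw [Nat.odd_iff] at this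
    split_ifs <;> omega
  have h := sum_le_sum hs
  rw [sum_add_distrib, ← mul_sum, ← card_filter, sum_const, smul_eq_mul] at h
  have hV' : (U.filter fun u => (univ.filter fun a => dg x a u = 1).card = 1).card ≤ 21 := hV
  omega

theorem Kts.count14 (K : Kts x) (p : P) (U : Finset (Fin 7 → Fin 5))
    (hU : ∀ u ∈ U, ∀ a, a ≠ p → dg x a u ≤ 2) :
    U.card ≤ ∑ u ∈ U, (univ.filter fun a => a ≠ p ∧ dg x a u = 1).card + 8 := by
  obtain ⟨F, hF7, hFo, hX⟩ := K.main
  let V := U.filter fun u => (univ.filter fun a => a ≠ p ∧ dg x a u = 1).card = 0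
  have hz : ∀ u ∈ V, ∀ a, a ≠ p → dg x a u = 0 ∨ dg x a u = 2 := by
    intro u hu a ha
    obtain ⟨hu1, hu2⟩ := mem_filter.1 hu
    have h2 := hU u hu1 a ha
    have h1 : dg x a u ≠ 1 := by
      intro h1
      rw [card_eq_zero, filter_eq_empty_iff] at hu2
      exact hu2 (mem_univ a) ⟨ha, h1⟩
    omega
  have hV : V.card ≤ 8 := by
    by_cases hp : p ∈ F
    · exact (hX p hp V hz).1
    · rw [card_eq_zero.2]
      · omega
      · rw [eq_empty_iff_forall_notMem]
        intro u hu
        obtain ⟨a, ha⟩ := card_pos.1 (hFo u).pos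
        obtain ⟨haF, hao⟩ := mem_filter.1 ha
        rw [Nat.odd_iff] at hao
        have := hz u hu a (by rintro rfl; exact hp haF)
        omega
  have hs : ∀ u ∈ U, 1 ≤ (univ.filter fun a => a ≠ p ∧ dg x a u = 1).card +
      (if (univ.filter fun a => a ≠ p ∧ dg x a u = 1).card = 0 then 1 else 0) := by
    intro u hu
    split_ifs <;> omega
  have h := sum_le_sum hs
  rw [sum_add_distrib, ← card_filter, sum_const, smul_eq_mul] at h
  have hV' : (U.filter fun u => (univ.filter fun a => a ≠ p ∧ dg x a u = 1).card = 0).card ≤ 8 := hV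
  omega
end

def res (j : Fin 8) (u : W) : Fin 7 → Fin 5 := fun i => u (j.succAbove i)

theorem ag_res (j : Fin 8) (u v : W) : ag u v = (if u j = v j then 1 else 0) +
    (univ.filter fun i => res j u i = res j v i).card := by
  unfold ag res
  rw [card_filter, card_filter, Fin.sum_univ_succAbove _ j]

theorem Code.res_inj {C : Finset W} (H : Code C) (j : Fin 8) {u v : W} (hu : u ∈ C) (hv : v ∈ C)
    (h : res j u = res j v) : u = v := by
  by_contra hne
  have h1 := H.dist u hu v hv hne
  rw [ag_res j, h] at h1
  simp at h1

theorem cntW (D : Finset W) (p : W → Prop) [DecidablePred p] :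
    (univ.filter fun a : ↥D => p a.1).card = (D.filter p).card := by
  rw [card_filter, card_filter, sum_coe_sort D (fun a => if p a then 1 else 0)]

theorem Code.pair_of_pr {C : Finset W} (H : Code C) (j : Fin 8) (α : Fin 5)
    (h : pr (B C j α) = 0) {u v : W} (hu : u ∈ B C j α) (hv : v ∈ B C j α) (hne : u ≠ v) :
    (univ.filter fun i => res j u i = res j v i).card = 1 := by
  obtain ⟨hu1, hu2⟩ := mem_filter.1 hu
  obtain ⟨hv1, hv2⟩ := mem_filter.1 hv
  have h1 := H.dist u hu1 v hv1 hne
  have h2 := ag_pos (hu2.trans hv2.symm)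
  have h3 : ag u v ≠ 1 := by
    intro h3
    have h4 := (sum_eq_zero_iff.1 h) u hu
    rw [card_eq_zero, filter_eq_empty_iff] at h4
    exact h4 hv h3
  have h4 := ag_res j u v
  rw [if_pos (hu2.trans hv2.symm)] at h4
  omega

theorem fr_nums (f : Fin 5 → ℕ) (h : ∑ γ, f γ = 15) (h2 : ∑ γ, f γ ^ 2 = 45) (γ : Fin 5) :
    f γ = 3 := by
  have h3 : ∑ γ, ((f γ : ℤ) - 3) ^ 2 = 0 := by
    zify at h h2
    rw [Fin.sum_univ_five] at *
    linarith
  have := (sum_eq_zero_iff_of_nonneg (fun _ _ => sq_nonneg _)).1 h3 γ (mem_univ γ)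
  have := pow_eq_zero_iff (two_ne_zero) |>.1 this
  omega

theorem fr_nums14 (f : Fin 5 → ℕ) (h : ∑ γ, f γ = 14) (h2 : ∑ γ, f γ ^ 2 = 40) :
    ∃ β, ∀ γ, f γ + (if β = γ then 1 else 0) = 3 := by
  have h3 : ∑ γ, ((f γ : ℤ) - 3) ^ 2 = 1 := by
    zify at h h2
    rw [Fin.sum_univ_five] at *
    linarith
  have hb : ∃ β, f β < 3 := by
    by_contra hc
    push Not at hc
    have := sum_le_sum fun γ (_ : γ ∈ (univ : Finset (Fin 5))) => hc γ
    simp at this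
    omega
  obtain ⟨β, hβ⟩ := hb
  have h4 := add_sum_erase univ (fun γ => ((f γ : ℤ) - 3) ^ 2) (mem_univ β)
  rw [h3] at h4
  have h5 : 0 ≤ ∑ γ ∈ univ.erase β, ((f γ : ℤ) - 3) ^ 2 := sum_nonneg fun _ _ => sq_nonneg _
  have h6 : f β = 2 := by
    by_contra h6
    have : (f β : ℤ) ≤ 1 := by omega

    nlinarith
  rw [h6] at h4
  have h7 : ∑ γ ∈ univ.erase β, ((f γ : ℤ) - 3) ^ 2 = 0 := by
    push_cast at h4
    linarith
  refine ⟨β, fun γ => ?_⟩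
  split_ifs with hg
  · rw [← hg, h6]
  · have := (sum_eq_zero_iff_of_nonneg (fun _ _ => sq_nonneg _)).1 h7 γ
      (mem_erase.2 ⟨fun h => hg h.symm, mem_univ γ⟩)
    have := pow_eq_zero_iff (two_ne_zero) |>.1 this
    omega

theorem Code.tight {C : Finset W} (H : Code C) (j : Fin 8) (α : Fin 5) (m s : ℕ)
    (hm : (B C j α).card = m) (hms : m ^ 2 + 6 * m = 7 * s) (h5 : 5 * m = s + 30) :
    pr (B C j α) = 0 ∧ ∀ i, sqs (B C j α) (j.succAbove i) = s := by
  have h := H.pr_eq j α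
  rw [hm, hms] at h
  have h2 : ∀ i, s ≤ sqs (B C j α) i := by
    intro i
    have := sqs_ge (B C j α) i 2
    rw [hm] at this
    omega
  have h3 : ∑ i : Fin 7, s ≤ ∑ i : Fin 7, sqs (B C j α) (j.succAbove i) :=
    sum_le_sum fun i _ => h2 _
  have h4 : ∑ i : Fin 7, s = 7 * s := by simp
  refine ⟨by omega, fun i => ?_⟩
  exact ((sum_eq_sum_iff_of_le fun i _ => h2 (j.succAbove i)).1 (by omega) i (mem_univ i)).symm

theorem Code.L15 {C : Finset W} (H : Code C) (j : Fin 8) (α : Fin 5) (hm : (B C j α).card = 15)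
    (U : Finset W) (hUC : U ⊆ C) (hU : ∀ u ∈ U, u j ≠ α) :
    3 * U.card ≤ ∑ u ∈ U, n1 u (B C j α) + 42 := by
  obtain ⟨hpr, hsq⟩ := H.tight j α 15 45 hm (by norm_num) (by norm_num)
  let x : ↥(B C j α) → Fin 7 → Fin 5 := fun a => res j a.1
  have K : Kts x := by
    refine ⟨by simpa using hm, fun a b hab => ?_, fun i γ => ?_⟩
    · exact H.pair_of_pr j α hpr a.2 b.2 fun h => hab (Subtype.ext h)
    · refine (cntW (B C j α) (fun a => a (j.succAbove i) = γ)).trans ?_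
      exact fr_nums (fr (B C j α) (j.succAbove i)) (by rw [fr_sum, hm]) (hsq i) γ
  have hag : ∀ u ∈ U, ∀ a, dg x a (res j u) = ag u a.1 := by
    intro u hu a
    rw [ag_comm, ag_res j, if_neg, zero_add]
    · rfl
    · rw [(mem_filter.1 a.2).2]
      exact fun h => hU u hu h.symm
  have hinj : Set.InjOn (res j) (U : Set W) := fun u hu v hv h =>
    H.res_inj j (hUC hu) (hUC hv) h
  have hk := K.count15 (U.image (res j)) (by
    intro w hw a
    obtain ⟨u, hu, rfl⟩ := mem_image.1 hw
    rw [hag u hu]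
    refine H.dist u (hUC hu) a.1 (mem_filter.1 a.2).1 ?_
    rintro rfl
    exact hU _ hu (mem_filter.1 a.2).2)
  rw [card_image_of_injOn hinj, sum_image hinj] at hk
  refine hk.trans_eq ?_
  congr 1
  refine sum_congr rfl fun u hu => ?_
  simp only [hag u hu]
  exact cntW (B C j α) (fun v => ag u v = 1)

theorem cntO (D : Finset W) (q : Option ↥D → Prop) [DecidablePred q] (p : W → Prop)
    [DecidablePred p] (h : ∀ a : ↥D, q (some a) ↔ p a.1) :
    (univ.filter q).card = (D.filter p).card + if q none then 1 else 0 := by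
  rw [card_filter, Fintype.sum_option, ← cntW, card_filter, add_comm]
  simp only [h]

theorem Code.L14 {C : Finset W} (H : Code C) (j : Fin 8) (α : Fin 5) (hm : (B C j α).card = 14)
    (U : Finset W) (hUC : U ⊆ C) (hU : ∀ u ∈ U, u j ≠ α) :
    U.card ≤ ∑ u ∈ U, n1 u (B C j α) + 8 := by
  obtain ⟨hpr, hsq⟩ := H.tight j α 14 40 hm (by norm_num) (by norm_num)
  have hβ : ∀ i : Fin 7, ∃ β, ∀ γ, fr (B C j α) (j.succAbove i) γ + (if β = γ then 1 else 0) = 3 :=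
    fun i => fr_nums14 _ (by rw [fr_sum, hm]) (hsq i)
  choose β hβ using hβ
  let x : Option ↥(B C j α) → Fin 7 → Fin 5 := fun a => a.elim β fun a => res j a.1
  have hmix : ∀ a : ↥(B C j α), (univ.filter fun i => β i = res j a.1 i).card = 1 := by
    intro a
    have h1 : ∑ i : Fin 7, fr (B C j α) (j.succAbove i) (res j a.1 i) = 20 := by
      unfold fr
      simp only [card_filter]
      rw [sum_comm]
      have h2 : ∀ v ∈ B C j α, (∑ i : Fin 7, if v (j.succAbove i) = res j a.1 i then 1 else 0) =
          1 + 6 * (if v = a.1 then 1 else 0) := by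
        intro v hv
        rw [← card_filter]
        split_ifs with hva
        · rw [hva]; simp [res]
        · exact H.pair_of_pr j α hpr hv a.2 hva
      rw [sum_congr rfl h2, sum_add_distrib, ← mul_sum, sum_ite_eq', if_pos a.2]
      simp [hm]
    have h3 := sum_congr rfl fun i (_ : i ∈ (univ : Finset (Fin 7))) => hβ i (res j a.1 i)
    rw [sum_add_distrib, h1, ← card_filter] at h3
    simp at h3
    omega
  have K : Kts x := by
    refine ⟨by simp [hm], fun a b hab => ?_, fun i γ => ?_⟩
    · rcases a with _ | a <;> rcases b with _ | b
      · exact absurd rfl hab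
      · exact hmix b
      · rw [← hmix a]
        simp only [eq_comm]
        rfl
      · exact H.pair_of_pr j α hpr a.2 b.2 fun h => hab (congrArg some (Subtype.ext h))
    · rw [cntO (B C j α) _ (fun a => a (j.succAbove i) = γ) (fun a => Iff.rfl)]
      exact hβ i γ
  have hag : ∀ u ∈ U, ∀ a, dg x (some a) (res j u) = ag u a.1 := by
    intro u hu a
    rw [ag_comm, ag_res j, if_neg, zero_add]
    · rfl
    · rw [(mem_filter.1 a.2).2]
      exact fun h => hU u hu h.symm
  have hinj : Set.InjOn (res j) (U : Set W) := fun u hu v hv h =>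
    H.res_inj j (hUC hu) (hUC hv) h
  have hk := K.count14 none (U.image (res j)) (by
    intro w hw a ha
    obtain ⟨u, hu, rfl⟩ := mem_image.1 hw
    rcases a with _ | a
    · exact absurd rfl ha
    rw [hag u hu]
    refine H.dist u (hUC hu) a.1 (mem_filter.1 a.2).1 ?_
    rintro rfl
    exact hU _ hu (mem_filter.1 a.2).2)
  rw [card_image_of_injOn hinj, sum_image hinj] at hk
  refine hk.trans_eq ?_
  congr 1
  refine sum_congr rfl fun u hu => ?_
  rw [cntO (B C j α) _ (fun v => ag u v = 1) (fun a => by rw [hag u hu]; simp)]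
  simp [n1]

end KTS
end

section
namespace KTS
open Finset
set_option linter.unusedSectionVars false

variable {C : Finset W}

theorem Code.card_ne1 (H : Code C) (j : Fin 8) (a0 : Fin 5) :
    (C.filter fun u => u j ≠ a0).card + (B C j a0).card = 65 := by
  unfold B
  rw [← H.card, card_eq_sum_ones C, card_filter, card_filter, ← sum_add_distrib]
  refine sum_congr rfl fun u _ => ?_
  by_cases h0 : u j = a0 <;> simp [h0]

theorem Code.card_ne2 (H : Code C) (j : Fin 8) {a0 a1 : Fin 5} (h01 : a0 ≠ a1) :
    (C.filter fun u => u j ≠ a0 ∧ u j ≠ a1).card + (B C j a0).card + (B C j a1).card = 65 := by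
  unfold B
  rw [← H.card, card_eq_sum_ones C, card_filter, card_filter, card_filter, ← sum_add_distrib,
    ← sum_add_distrib]
  refine sum_congr rfl fun u _ => ?_
  by_cases h0 : u j = a0
  · simp [h0, h01]
  · by_cases h1 : u j = a1 <;> simp [h0, h1, h01.symm]

theorem Code.card_ne3 (H : Code C) (j : Fin 8) {a0 a1 a2 : Fin 5} (h01 : a0 ≠ a1) (h02 : a0 ≠ a2)
    (h12 : a1 ≠ a2) :
    (C.filter fun u => u j ≠ a0 ∧ u j ≠ a1 ∧ u j ≠ a2).card + (B C j a0).card + (B C j a1).card +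
      (B C j a2).card = 65 := by
  unfold B
  rw [← H.card, card_eq_sum_ones C, card_filter, card_filter, card_filter, card_filter,
    ← sum_add_distrib, ← sum_add_distrib, ← sum_add_distrib]
  refine sum_congr rfl fun u _ => ?_
  by_cases h0 : u j = a0
  · simp [h0, h01, h02]
  · by_cases h1 : u j = a1
    · simp [h1, h01.symm, h12]
    · by_cases h2 : u j = a2
      · simp [h2, h02.symm, h12.symm]
      · simp [h0, h1, h2]

theorem third : ∀ a b : Fin 5, ∃ c, a ≠ c ∧ b ≠ c := by decide

theorem second : ∀ a : Fin 5, ∃ c, a ≠ c := by decide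

/-- block sizes in column `j` -/
def sz (C : Finset W) (j : Fin 8) (γ : Fin 5) : ℕ := (B C j γ).card

theorem Code.cb (H : Code C) (j : Fin 8) :
    (∑ γ, hh (sz C j γ) ≤ 40) ∧ (n15 (sz C j) ≤ 1 → ∑ γ, hh (sz C j γ) ≤ 26) ∧
    (n15 (sz C j) = 0 → ∑ γ, hh (sz C j γ) ≤ 22) ∧
    (n15 (sz C j) = 0 → n14 (sz C j) ≤ 2 → ∑ γ, hh (sz C j γ) ≤ 16) ∧
    (n15 (sz C j) = 0 → n14 (sz C j) ≤ 1 → ∑ γ, hh (sz C j γ) ≤ 12) := col_bound (sz C j) (H.le15 j) (H.sizes j)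

theorem Code.n15_le (H : Code C) (j : Fin 8) : n15 (sz C j) ≤ 1 := by
  by_contra hc
  push Not at hc
  obtain ⟨a, ha, b, hb, hab⟩ := one_lt_card.1 hc
  have ha' : (B C j a).card = 15 := (mem_filter.1 ha).2
  have hb' : (B C j b).card = 15 := (mem_filter.1 hb).2
  obtain ⟨c, hac, hbc⟩ := third a b
  have hM := M_ge C j a b c hab hac hbc
  have h1 := H.L15 j a ha' _ (filter_subset (fun u => u j ≠ a) C) fun u hu => (mem_filter.1 hu).2
  have h2 := H.L15 j b hb' _ (filter_subset (fun u => u j ≠ a ∧ u j ≠ b) C)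
    fun u hu => (mem_filter.1 hu).2.2
  have c1 := H.card_ne1 j a
  have c2 := H.card_ne2 j hab
  have hle := H.M_le_of j 40 fun i => (H.cb i).1
  omega

theorem Code.le14 (H : Code C) (j : Fin 8) (a : Fin 5) : (B C j a).card ≠ 15 := by
  intro ha
  obtain ⟨b, hab⟩ := second a
  obtain ⟨c, hac, hbc⟩ := third a b
  have hM := M_ge C j a b c hab hac hbc
  have h1 := H.L15 j a ha _ (filter_subset (fun u => u j ≠ a) C) fun u hu => (mem_filter.1 hu).2
  have c1 := H.card_ne1 j a
  have hle := H.M_le_of j 26 fun i => (H.cb i).2.1 (H.n15_le i)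
  omega

theorem Code.n15_zero (H : Code C) (j : Fin 8) : n15 (sz C j) = 0 := by
  unfold n15
  rw [card_eq_zero, filter_eq_empty_iff]
  exact fun a _ => H.le14 j a

theorem Code.n14_le2 (H : Code C) (j : Fin 8) : n14 (sz C j) ≤ 2 := by
  by_contra hc
  push Not at hc
  obtain ⟨a, b, c, ha, hb, hc, hab, hac, hbc⟩ := two_lt_card_iff.1 hc
  have ha' : (B C j a).card = 14 := (mem_filter.1 ha).2
  have hb' : (B C j b).card = 14 := (mem_filter.1 hb).2
  have hc' : (B C j c).card = 14 := (mem_filter.1 hc).2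
  have hM := M_ge C j a b c hab hac hbc
  have h1 := H.L14 j a ha' _ (filter_subset (fun u => u j ≠ a) C) fun u hu => (mem_filter.1 hu).2
  have h2 := H.L14 j b hb' _ (filter_subset (fun u => u j ≠ a ∧ u j ≠ b) C)
    fun u hu => (mem_filter.1 hu).2.2
  have h3 := H.L14 j c hc' _ (filter_subset (fun u => u j ≠ a ∧ u j ≠ b ∧ u j ≠ c) C)
    fun u hu => (mem_filter.1 hu).2.2.2
  have c1 := H.card_ne1 j a
  have c2 := H.card_ne2 j hab
  have c3 := H.card_ne3 j hab hac hbc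
  have hle := H.M_le_of j 22 fun i => (H.cb i).2.2.1 (H.n15_zero i)
  omega

theorem Code.n14_le1 (H : Code C) (j : Fin 8) : n14 (sz C j) ≤ 1 := by
  by_contra hc
  push Not at hc
  obtain ⟨a, ha, b, hb, hab⟩ := one_lt_card.1 hc
  have ha' : (B C j a).card = 14 := (mem_filter.1 ha).2
  have hb' : (B C j b).card = 14 := (mem_filter.1 hb).2
  obtain ⟨c, hac, hbc⟩ := third a b
  have hM := M_ge C j a b c hab hac hbc
  have h1 := H.L14 j a ha' _ (filter_subset (fun u => u j ≠ a) C) fun u hu => (mem_filter.1 hu).2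
  have h2 := H.L14 j b hb' _ (filter_subset (fun u => u j ≠ a ∧ u j ≠ b) C)
    fun u hu => (mem_filter.1 hu).2.2
  have c1 := H.card_ne1 j a
  have c2 := H.card_ne2 j hab
  have hle := H.M_le_of j 16 fun i => (H.cb i).2.2.2.1 (H.n15_zero i) (H.n14_le2 i)
  omega

theorem Code.le13 (H : Code C) (j : Fin 8) (a : Fin 5) : (B C j a).card ≤ 13 := by
  have h15 := H.le15 j a
  have h15' := H.le14 j a
  by_contra hc
  have ha : (B C j a).card = 14 := by omega
  obtain ⟨b, hab⟩ := second a
  obtain ⟨c, hac, hbc⟩ := third a b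
  have hM := M_ge C j a b c hab hac hbc
  have h1 := H.L14 j a ha _ (filter_subset (fun u => u j ≠ a) C) fun u hu => (mem_filter.1 hu).2
  have c1 := H.card_ne1 j a
  have hle := H.M_le_of j 12 fun i => (H.cb i).2.2.2.2 (H.n15_zero i) (H.n14_le1 i)
  omega

theorem Code.eq13 (H : Code C) (j : Fin 8) (a : Fin 5) : (B C j a).card = 13 := by
  have h := H.sizes j
  refine (sum_eq_sum_iff_of_le (s := univ) (g := fun _ => 13)
    (fun i _ => H.le13 j i)).1 ?_ a (mem_univ a)
  rw [h]
  simp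

theorem final1 (C : Finset W) (hd : ∀ u ∈ C, ∀ v ∈ C, u ≠ v → 6 ≤ hammingDist u v)
    (hc : C.card = 65) (j : Fin 8) (α : Fin 5) : (C.filter (fun w => w j = α)).card = 13 := by
  refine Code.eq13 ⟨hc, fun u hu v hv h => ?_⟩ j α
  have h1 := hd u hu v hv h
  have h2 := ag_dist u v
  omega

theorem final2 (C : Finset W) (hd : ∀ u ∈ C, ∀ v ∈ C, u ≠ v → 6 ≤ hammingDist u v) :
    C.card ≤ 65 := by
  by_contra hc
  obtain ⟨D, hDC, hD⟩ := exists_subset_card_eq (show 66 ≤ C.card by omega)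
  have key : ∀ w ∈ D, ∀ j α, ((D.erase w).filter (fun v => v j = α)).card = 13 := by
    intro w hw j α
    refine final1 (D.erase w) (fun u hu v hv h => hd u (hDC (mem_of_mem_erase hu)) v
      (hDC (mem_of_mem_erase hv)) h) ?_ j α
    rw [card_erase_of_mem hw, hD]
  obtain ⟨u, hu, v, hv, huv⟩ := one_lt_card.1 (show 1 < D.card by omega)
  obtain ⟨j, hj⟩ := Function.ne_iff.1 huv
  have h1 := key u hu j (u j)
  have h2 := key v hv j (u j)
  rw [filter_erase, card_erase_of_mem (by simp [hu])] at h1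
  rw [filter_erase, erase_eq_of_notMem (by simp [Ne.symm hj])] at h2
  omega

end KTS
end

/-- `A_5(8,6) ≤ 65`: every `(8,6)_5`-code of cardinality 65 contains every symbol
exactly 13 times in each column, and consequently every code `C ⊆ (Fin 5)^8` with
minimum Hamming distance at least 6 has at most 65 elements. -/
theorem A5_8_6_le_65 :
    (∀ C : Finset (Fin 8 → Fin 5),
      (∀ u ∈ C, ∀ v ∈ C, u ≠ v → 6 ≤ hammingDist u v) → C.card = 65 →
      ∀ j : Fin 8, ∀ α : Fin 5, (C.filter (fun w => w j = α)).card = 13)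
    ∧ (∀ C : Finset (Fin 8 → Fin 5),
      (∀ u ∈ C, ∀ v ∈ C, u ≠ v → 6 ≤ hammingDist u v) → C.card ≤ 65) := by
  exact ⟨KTS.final1, KTS.final2⟩
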